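/- The set of functions f ∈ C(λ) satisfying both liminf_{n→∞} H_n(μ_f)/n = 0 and limsup_{n→∞} H_n(μ_f)/(n·log n) = 1 is comeager (residual) in C(λ). In other words, for the generic f ∈ C(λ), the normalized sampling entropy H_n(μ_f)/n has liminf 0 while H_n(μ_f)/(n·log n) has limsup 1, so H_n(μ_f) converges neither after normalizing by n nor by n·log n. -/

import Mathlib

open MeasureTheory Filter

/-- The probability that `n` i.i.d. points sampled from `μ` realize the pattern `π`. -/
noncomputable def patternProb {n : ℕ} (μ : Measure (ℝ × ℝ)) (π : Equiv.Perm (Fin n)) : ℝ :=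
  (n.factorial : ℝ) *
    ((Measure.pi fun _ : Fin n => μ)
      {p : Fin n → ℝ × ℝ | ∀ i j : Fin n, i < j →
        (p i).1 < (p j).1 ∧ ((p i).2 < (p j).2 ↔ π i < π j)}).toReal

/-- Sampling entropy `H_n(μ)`. -/
noncomputable def samplingEntropy (μ : Measure (ℝ × ℝ)) (n : ℕ) : ℝ :=
  ∑ π : Equiv.Perm (Fin n), Real.negMulLog (patternProb μ π)

/-- A pre-permuton: a Borel probability measure on `ℝ²` with atomless marginals. -/
def IsPrePermuton (μ : Measure (ℝ × ℝ)) : Prop :=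
  IsProbabilityMeasure μ ∧ (∀ x : ℝ, μ.map Prod.fst {x} = 0) ∧ ∀ y : ℝ, μ.map Prod.snd {y} = 0

/-- A permuton: a Borel probability measure on `[0,1]²` with uniform marginals. -/
def IsPermuton (μ : Measure (ℝ × ℝ)) : Prop :=
  μ (Set.Icc (0:ℝ) 1 ×ˢ Set.Icc (0:ℝ) 1)ᶜ = 0 ∧
  μ.map Prod.fst = volume.restrict (Set.Icc (0:ℝ) 1) ∧
  μ.map Prod.snd = volume.restrict (Set.Icc (0:ℝ) 1)

/-- The space C(λ) of continuous Lebesgue-measure-preserving maps [0,1] → [0,1],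
with the supremum metric (inherited from C([0,1],[0,1]) as a subtype). -/
def MPContinuousMap : Type :=
  {f : C(unitInterval, unitInterval) // MeasurePreserving f volume volume}

noncomputable instance : MetricSpace MPContinuousMap :=
  inferInstanceAs (MetricSpace {f : C(unitInterval, unitInterval) //
    MeasurePreserving f volume volume})

/-- The permuton of f ∈ C(λ): the pushforward of Lebesgue measure on [0,1] under
x ↦ (x, f x). -/
noncomputable def graphPermutonCM (f : MPContinuousMap) : Measure (ℝ × ℝ) :=
  Measure.map (fun t : unitInterval => ((t : ℝ), (f.1 t : ℝ))) volume

/-!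
For fixed `n`, every pattern probability, hence `H_n`, is continuous in `f`, because almost surely
the sampled values are pairwise distinct. Since `0 ≤ H_n / n` and `H_n / (n log n) ≤ 1`, a Baire
category argument reduces the theorem to the density, for all `N`, of the set of `f` for which
`H_n / n < c` for some `n ≥ N`, where `c > 0`, and of the set of `f` for which
`H_n / (n log n) > c` for some `n ≥ N`, where `c < 1`.

High entropy: precompose `f` with a zigzag running `k` times across each interval of length `1 / m`.
As `k` grows with `m` and `n` fixed, the bound on the probability of each pattern tends to
`m ^ n / n!`, so `H_n` is at least `log n!` up to a term linear in `n`.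

Low entropy: by Hall's theorem `f` is uniformly close to a comb, a piecewise linear map which sends
the first third of the `a`-th interval of length `1 / M` increasingly onto the `τ a`-th one, for
some permutation `τ`. The comb has a section with values in these thirds, and pushes the image
of Lebesgue measure under this section forward to Lebesgue measure. A small perturbation of that
image has no atoms and full support, so precomposing the comb with its quantile function gives a
continuous measure-preserving map close to `f`. Outside a set as small as we like, the pattern of a
sample is determined by the `M` blocks into which its points fall, so there are at most
`(n + 1) ^ M` likely patterns.
-/

open scoped unitInterval ENNReal

section Pattern

variable {α : Type*} {n : ℕ}

/-- The tuple `y` realizes the pattern `π`: reading it from left to right, its entries are ordered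
as the values of `π`. For non-injective `y` a tie counts as a descent. -/
def HasPattern [LT α] (y : Fin n → α) (π : Equiv.Perm (Fin n)) : Prop :=
  ∀ i j, i < j → (y i < y j ↔ π i < π j)

theorem HasPattern.unique [LT α] {y : Fin n → α} {π τ : Equiv.Perm (Fin n)}
    (hπ : HasPattern y π) (hτ : HasPattern y τ) : π = τ := by
  have hmono : StrictMono (τ ∘ ⇑π⁻¹) := by
    intro i j hij
    have hij' : π (π⁻¹ i) < π (π⁻¹ j) := by simpa using hij
    rcases lt_trichotomy (π⁻¹ i) (π⁻¹ j) with h | h | h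
    · exact (hτ _ _ h).1 ((hπ _ _ h).2 hij')
    · exact absurd h (π⁻¹.injective.ne hij.ne)
    · have hy := mt (hπ _ _ h).1 hij'.asymm
      exact (not_lt.1 (mt (hτ _ _ h).2 hy)).lt_of_ne (τ.injective.ne h.ne')
  ext i
  have hid := hmono.range_inj strictMono_id |>.1
    (by rw [(τ.surjective.comp π⁻¹.surjective).range_eq, Set.range_id])
  simpa using congrArg Fin.val (congrFun hid (π i)).symm

variable [LinearOrder α]

theorem hasPattern_iff_strictMono_comp {y : Fin n → α} (hy : Function.Injective y)
    {π : Equiv.Perm (Fin n)} : HasPattern y π ↔ StrictMono (y ∘ ⇑π⁻¹) := by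
  refine ⟨fun h i j hij ↦ ?_, fun h i j _ ↦ by simpa using h.lt_iff_lt (a := π i) (b := π j)⟩
  have hij' : π (π⁻¹ i) < π (π⁻¹ j) := by simpa using hij
  rcases lt_trichotomy (π⁻¹ i) (π⁻¹ j) with h' | h' | h'
  · exact (h _ _ h').2 hij'
  · exact absurd h' (π⁻¹.injective.ne hij.ne)
  · exact (not_lt.1 (mt (h _ _ h').1 hij'.asymm)).lt_of_ne (hy.ne h'.ne')

theorem exists_hasPattern {y : Fin n → α} (hy : Function.Injective y) :
    ∃ π : Equiv.Perm (Fin n), HasPattern y π := by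
  refine ⟨(Tuple.sort y)⁻¹, (hasPattern_iff_strictMono_comp hy).2 ?_⟩
  rw [inv_inv]
  exact (Tuple.monotone_sort y).strictMono_of_injective (hy.comp (Tuple.sort y).injective)

variable [TopologicalSpace α] [OrderClosedTopology α] [SecondCountableTopology α]
  [MeasurableSpace α] [OpensMeasurableSpace α] {β : Type*} [MeasurableSpace β] {X : β → α}

theorem measurableSet_setOf_strictMono_comp (hX : Measurable X) :
    MeasurableSet {p : Fin n → β | StrictMono (X ∘ p)} := by
  simp only [StrictMono, Function.comp_apply]
  measurability

theorem measurableSet_setOf_hasPattern_comp (hX : Measurable X) (π : Equiv.Perm (Fin n)) :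
    MeasurableSet {p : Fin n → β | HasPattern (X ∘ p) π} := by
  simp only [HasPattern, Function.comp_apply]
  measurability

end Pattern

section Sample

variable {α β ι : Type*} [MeasurableSpace α] [MeasurableSpace β] [Fintype ι]
  {μ : Measure α} [IsProbabilityMeasure μ] {X : α → β}

theorem measurePreserving_comp_perm (τ : Equiv.Perm ι) :
    MeasurePreserving (fun p : ι → α ↦ p ∘ τ) (Measure.pi fun _ ↦ μ) (Measure.pi fun _ ↦ μ) := by
  convert measurePreserving_piCongrLeft (fun _ : ι ↦ μ) τ.symm using 1
  ext p i
  simp [MeasurableEquiv.piCongrLeft, Equiv.piCongrLeft, Equiv.piCongrLeft']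

theorem pi_setOf_apply_eq_apply_le [MeasurableEq β] (hX : Measurable X) {ε : ℝ≥0∞}
    (hε : ∀ b, μ (X ⁻¹' {b}) ≤ ε) {i j : ι} (hij : i ≠ j) :
    Measure.pi (fun _ : ι ↦ μ) {p | X (p i) = X (p j)} ≤ ε := by
  have hindep := ProbabilityTheory.iIndepFun_pi (μ := fun _ : ι ↦ μ) (X := fun _ ↦ id)
    (fun _ ↦ aemeasurable_id) |>.indepFun hij
  have hlaw : (Measure.pi fun _ : ι ↦ μ).map (fun p ↦ (p i, p j)) = μ.prod μ := by
    have := (ProbabilityTheory.indepFun_iff_map_prod_eq_prod_map_map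
      (measurable_pi_apply i).aemeasurable (measurable_pi_apply j).aemeasurable).1 hindep
    simpa [(measurePreserving_eval (fun _ : ι ↦ μ) _).map_eq] using this
  have hdiag : MeasurableSet {q : α × α | X q.1 = X q.2} :=
    measurableSet_eq_fun (hX.comp measurable_fst) (hX.comp measurable_snd)
  calc Measure.pi (fun _ : ι ↦ μ) {p | X (p i) = X (p j)}
      = ∫⁻ a, μ (X ⁻¹' {X a}) ∂μ := by
        have hmap := Measure.map_apply (μ := Measure.pi fun _ : ι ↦ μ)
          (f := fun p ↦ (p i, p j)) (by fun_prop) hdiag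
        rw [hlaw, Measure.prod_apply hdiag] at hmap
        simpa only [Set.preimage, Set.mem_ofPred_eq, Set.mem_singleton_iff, eq_comm] using hmap.symm
    _ ≤ ∫⁻ _, ε ∂μ := lintegral_mono fun a ↦ hε (X a)
    _ = ε := by simp

theorem ae_injective_comp_pi [MeasurableEq β] (hX : Measurable X)
    (hX₀ : ∀ b, μ (X ⁻¹' {b}) = 0) :
    ∀ᵐ p ∂Measure.pi fun _ : ι ↦ μ, Function.Injective (X ∘ p) := by
  have hne : ∀ᵐ p ∂Measure.pi fun _ : ι ↦ μ, ∀ i j, i ≠ j → X (p i) ≠ X (p j) := by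
    simp only [ae_all_iff]
    exact fun i j hij ↦ measure_eq_zero_iff_ae_notMem.1
      (le_zero_iff.1 (pi_setOf_apply_eq_apply_le hX (fun b ↦ (hX₀ b).le) hij))
  filter_upwards [hne] with p hp i j hij
  exact not_imp_not.1 (hp i j) hij

variable {n : ℕ} [LinearOrder β] [TopologicalSpace β] [OrderClosedTopology β]
  [SecondCountableTopology β] [OpensMeasurableSpace β]

theorem pi_setOf_hasPattern_eq_pi_setOf_strictMono (hX : Measurable X)
    (hX₀ : ∀ b, μ (X ⁻¹' {b}) = 0) (π : Equiv.Perm (Fin n)) :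
    Measure.pi (fun _ : Fin n ↦ μ) {p | HasPattern (X ∘ p) π} =
      Measure.pi (fun _ : Fin n ↦ μ) {p | StrictMono (X ∘ p)} := by
  rw [← (measurePreserving_comp_perm π⁻¹).measure_preimage
    (measurableSet_setOf_strictMono_comp hX).nullMeasurableSet]
  refine measure_congr ?_
  filter_upwards [ae_injective_comp_pi hX hX₀] with p hp
  exact propext (hasPattern_iff_strictMono_comp hp)

theorem pi_setOf_strictMono (hX : Measurable X) (hX₀ : ∀ b, μ (X ⁻¹' {b}) = 0) :
    Measure.pi (fun _ : Fin n ↦ μ) {p | StrictMono (X ∘ p)} = (n.factorial : ℝ≥0∞)⁻¹ := by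
  have hsum : ∑ π : Equiv.Perm (Fin n),
      Measure.pi (fun _ : Fin n ↦ μ) {p | HasPattern (X ∘ p) π} = 1 := by
    rw [← measure_biUnion_finset
      (fun π _ τ _ h ↦ Set.disjoint_left.2 fun p hπ hτ ↦ h (hπ.unique hτ))
      fun π _ ↦ measurableSet_setOf_hasPattern_comp hX π]
    refine (measure_congr (eventuallyEq_univ.2 ?_)).trans measure_univ
    filter_upwards [ae_injective_comp_pi hX hX₀] with p hp
    simpa using exists_hasPattern hp
  simp only [pi_setOf_hasPattern_eq_pi_setOf_strictMono hX hX₀, Finset.sum_const,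
    Finset.card_univ, Fintype.card_perm, Fintype.card_fin, nsmul_eq_mul] at hsum
  exact ENNReal.eq_inv_of_mul_eq_one_left ((mul_comm _ _).trans hsum)

theorem pi_setOf_hasPattern (hX : Measurable X) (hX₀ : ∀ b, μ (X ⁻¹' {b}) = 0)
    (π : Equiv.Perm (Fin n)) :
    Measure.pi (fun _ : Fin n ↦ μ) {p | HasPattern (X ∘ p) π} = (n.factorial : ℝ≥0∞)⁻¹ :=
  (pi_setOf_hasPattern_eq_pi_setOf_strictMono hX hX₀ π).trans (pi_setOf_strictMono hX hX₀)

end Sample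

section FiniteEntropy

variable {ι : Type*} {s : Finset ι} {p : ι → ℝ}

theorem negMulLog_le_mul_log_add {t K : ℝ} (ht : 0 ≤ t) (hK : 0 < K) :
    Real.negMulLog t ≤ t * Real.log K + K⁻¹ - t := by
  rcases ht.eq_or_lt with rfl | ht
  · simp [hK.le]
  · have hlog := Real.log_le_sub_one_of_pos (x := (t * K)⁻¹) (by positivity)
    rw [Real.log_inv, Real.log_mul ht.ne' hK.ne'] at hlog
    have hmul := mul_le_mul_of_nonneg_left hlog ht.le
    have hid : t * ((t * K)⁻¹ - 1) = K⁻¹ - t := by field_simp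
    rw [Real.negMulLog]
    linarith

theorem sum_negMulLog_le (hp : ∀ i ∈ s, 0 ≤ p i) {Q : ℝ} (hQ : 0 < Q) (hs : s.card ≤ Q) :
    ∑ i ∈ s, Real.negMulLog (p i) ≤ (∑ i ∈ s, p i) * Real.log Q + 1 - ∑ i ∈ s, p i :=
  calc ∑ i ∈ s, Real.negMulLog (p i)
      ≤ ∑ i ∈ s, (p i * Real.log Q + Q⁻¹ - p i) :=
        Finset.sum_le_sum fun i hi ↦ negMulLog_le_mul_log_add (hp i hi) hQ
    _ = (∑ i ∈ s, p i) * Real.log Q + s.card * Q⁻¹ - ∑ i ∈ s, p i := by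
        simp [Finset.sum_add_distrib, Finset.sum_mul]
    _ ≤ (∑ i ∈ s, p i) * Real.log Q + 1 - ∑ i ∈ s, p i := by
        gcongr
        rwa [← div_eq_mul_inv, div_le_one hQ]

theorem neg_log_le_sum_negMulLog (hp : ∀ i ∈ s, 0 ≤ p i) (hsum : ∑ i ∈ s, p i = 1) {D : ℝ}
    (hD : ∀ i ∈ s, p i ≤ D) : -Real.log D ≤ ∑ i ∈ s, Real.negMulLog (p i) :=
  calc -Real.log D = ∑ i ∈ s, p i * -Real.log D := by rw [← Finset.sum_mul, hsum, one_mul]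
    _ ≤ ∑ i ∈ s, Real.negMulLog (p i) := by
        refine Finset.sum_le_sum fun i hi ↦ ?_
        rcases (hp i hi).eq_or_lt with h | h
        · simp [← h]
        · rw [Real.negMulLog, neg_mul_comm]
          gcongr
          exact hD i hi

end FiniteEntropy

section SamplingEntropy

variable {α : Type*} [MeasurableSpace α] {μ : Measure α} [IsProbabilityMeasure μ] {X Y : α → ℝ}
  {n : ℕ}

theorem patternProb_map_prodMk (hX : Measurable X) (hY : Measurable Y) (π : Equiv.Perm (Fin n)) :
    patternProb (μ.map fun a ↦ (X a, Y a)) π = n.factorial *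
      (Measure.pi fun _ : Fin n ↦ μ).real {p | StrictMono (X ∘ p) ∧ HasPattern (Y ∘ p) π} := by
  have hXY : Measurable fun a ↦ (X a, Y a) := hX.prodMk hY
  have := Measure.isProbabilityMeasure_map hXY.aemeasurable (μ := μ)
  have hset : {p : Fin n → ℝ × ℝ | ∀ i j : Fin n, i < j →
        (p i).1 < (p j).1 ∧ ((p i).2 < (p j).2 ↔ π i < π j)} =
      {p | StrictMono (Prod.fst ∘ p)} ∩ {p | HasPattern (Prod.snd ∘ p) π} := by
    ext p
    exact ⟨fun h ↦ ⟨fun i j hij ↦ (h i j hij).1, fun i j hij ↦ (h i j hij).2⟩,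
      fun h i j hij ↦ ⟨h.1 hij, h.2 i j hij⟩⟩
  rw [patternProb, hset, ← Measure.pi_map_pi fun _ ↦ hXY.aemeasurable,
    Measure.map_apply (by fun_prop) <|
      (measurableSet_setOf_strictMono_comp measurable_fst).inter
        (measurableSet_setOf_hasPattern_comp measurable_snd π)]
  rfl

theorem sum_patternProb_map_prodMk (hX : Measurable X) (hY : Measurable Y)
    (G : Finset (Equiv.Perm (Fin n))) :
    ∑ π ∈ G, patternProb (μ.map fun a ↦ (X a, Y a)) π = n.factorial *
      (Measure.pi fun _ : Fin n ↦ μ).real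
        {p | StrictMono (X ∘ p) ∧ ∃ π ∈ G, HasPattern (Y ∘ p) π} := by
  have hset : {p : Fin n → α | StrictMono (X ∘ p) ∧ ∃ π ∈ G, HasPattern (Y ∘ p) π} =
      ⋃ π ∈ G, {p | StrictMono (X ∘ p)} ∩ {p | HasPattern (Y ∘ p) π} := by
    ext p
    simp
  rw [hset, measureReal_biUnion_finset
    (fun π _ τ _ h ↦ Set.disjoint_left.2 fun p hπ hτ ↦ h (hπ.2.unique hτ.2))
    fun π _ ↦ (measurableSet_setOf_strictMono_comp hX).inter
      (measurableSet_setOf_hasPattern_comp hY π), Finset.mul_sum]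
  exact Finset.sum_congr rfl fun π _ ↦ patternProb_map_prodMk hX hY π

theorem patternProb_nonneg (μ : Measure (ℝ × ℝ)) (π : Equiv.Perm (Fin n)) :
    0 ≤ patternProb μ π :=
  mul_nonneg (Nat.cast_nonneg _) ENNReal.toReal_nonneg

namespace IsPrePermuton

variable {μ : Measure (ℝ × ℝ)} (hμ : IsPrePermuton μ)
include hμ

theorem sum_patternProb (n : ℕ) : ∑ π : Equiv.Perm (Fin n), patternProb μ π = 1 := by
  obtain ⟨_, hfst, hsnd⟩ := hμ
  have hX₀ (x : ℝ) : μ (Prod.fst ⁻¹' {x}) = 0 :=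
    Measure.map_apply measurable_fst (.singleton x) ▸ hfst x
  have hY₀ (y : ℝ) : μ (Prod.snd ⁻¹' {y}) = 0 :=
    Measure.map_apply measurable_snd (.singleton y) ▸ hsnd y
  have hae : {p : Fin n → ℝ × ℝ | StrictMono (Prod.fst ∘ p) ∧
        ∃ π ∈ (Finset.univ : Finset (Equiv.Perm (Fin n))), HasPattern (Prod.snd ∘ p) π}
      =ᵐ[Measure.pi fun _ ↦ μ] {p | StrictMono (Prod.fst ∘ p)} := by
    filter_upwards [ae_injective_comp_pi measurable_snd hY₀] with p hp
    refine propext (and_iff_left ?_)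
    simpa using exists_hasPattern hp
  have hsum := sum_patternProb_map_prodMk (μ := μ) measurable_fst measurable_snd
    (Finset.univ : Finset (Equiv.Perm (Fin n)))
  rw [measureReal_congr hae, measureReal_def, pi_setOf_strictMono measurable_fst hX₀] at hsum
  simpa [Nat.factorial_ne_zero] using hsum

theorem samplingEntropy_nonneg (n : ℕ) : 0 ≤ samplingEntropy μ n :=
  Finset.sum_nonneg fun π _ ↦ Real.negMulLog_nonneg (patternProb_nonneg μ π) <|
    hμ.sum_patternProb n ▸ Finset.single_le_sum (fun π _ ↦ patternProb_nonneg μ π)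
      (Finset.mem_univ π)

theorem samplingEntropy_le_log_factorial (n : ℕ) :
    samplingEntropy μ n ≤ Real.log n.factorial := by
  have h := sum_negMulLog_le (s := (Finset.univ : Finset (Equiv.Perm (Fin n))))
    (fun π _ ↦ patternProb_nonneg μ π) (Q := n.factorial) (by positivity)
    (by simp [Fintype.card_perm])
  rwa [hμ.sum_patternProb, one_mul, add_sub_cancel_right] at h

theorem samplingEntropy_div_le_one (n : ℕ) : samplingEntropy μ n / (n * Real.log n) ≤ 1 := by
  refine div_le_one_of_le₀ ?_ (mul_nonneg n.cast_nonneg (Real.log_natCast_nonneg n))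
  calc samplingEntropy μ n ≤ Real.log n.factorial := hμ.samplingEntropy_le_log_factorial n
    _ ≤ Real.log ((n : ℝ) ^ n) :=
        Real.log_le_log (by positivity) (mod_cast Nat.factorial_le_pow n)
    _ = n * Real.log n := Real.log_pow n n

theorem samplingEntropy_le_of_sum_compl_le (G : Finset (Equiv.Perm (Fin n))) {Q β : ℝ}
    (hQ : 1 ≤ Q) (hG : G.card ≤ Q) (hβ : ∑ π ∈ Gᶜ, patternProb μ π ≤ β) :
    samplingEntropy μ n ≤ Real.log Q + β * Real.log n.factorial + 1 := by
  have hsum := hμ.sum_patternProb n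
  rw [← Finset.sum_add_sum_compl G] at hsum
  have hG₀ : 0 ≤ ∑ π ∈ Gᶜ, patternProb μ π := Finset.sum_nonneg fun π _ ↦ patternProb_nonneg μ π
  have hmain : ∑ π ∈ G, Real.negMulLog (patternProb μ π) ≤
      (∑ π ∈ G, patternProb μ π) * Real.log Q + 1 - ∑ π ∈ G, patternProb μ π :=
    sum_negMulLog_le (fun π _ ↦ patternProb_nonneg μ π) (by linarith) hG
  have hrest : ∑ π ∈ Gᶜ, Real.negMulLog (patternProb μ π) ≤
      (∑ π ∈ Gᶜ, patternProb μ π) * Real.log n.factorial + 1 - ∑ π ∈ Gᶜ, patternProb μ π := by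
    refine sum_negMulLog_le (fun π _ ↦ patternProb_nonneg μ π) (by positivity) ?_
    simpa [Fintype.card_perm] using Nat.cast_le (α := ℝ).2 Gᶜ.card_le_univ
  have hlog : 0 ≤ Real.log n.factorial := Real.log_natCast_nonneg _
  have hmain' := mul_le_mul_of_nonneg_right
    (by linarith : ∑ π ∈ G, patternProb μ π ≤ 1) (Real.log_nonneg hQ)
  have hrest' := mul_le_mul_of_nonneg_right hβ hlog
  rw [samplingEntropy, ← Finset.sum_add_sum_compl G]
  linarith

theorem neg_log_le_samplingEntropy {D : ℝ}
    (hD : ∀ π : Equiv.Perm (Fin n), patternProb μ π ≤ D) : -Real.log D ≤ samplingEntropy μ n :=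
  neg_log_le_sum_negMulLog (fun π _ ↦ patternProb_nonneg μ π) (hμ.sum_patternProb n)
    fun π _ ↦ hD π

end IsPrePermuton

end SamplingEntropy

section GraphPermuton

variable {n : ℕ}

theorem isPrePermuton_graphPermutonCM (f : MPContinuousMap) :
    IsPrePermuton (graphPermutonCM f) := by
  have hf : Measurable fun t : I ↦ (f.1 t : ℝ) := by have := f.1.continuous; fun_prop
  have hgraph : Measurable fun t : I ↦ ((t : ℝ), (f.1 t : ℝ)) := measurable_subtype_coe.prodMk hf
  have hval (x : ℝ) : volume ((↑) ⁻¹' {x} : Set I) = 0 :=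
    (Set.subsingleton_singleton.preimage Subtype.val_injective).measure_zero _
  refine ⟨Measure.isProbabilityMeasure_map hgraph.aemeasurable, fun x ↦ ?_, fun y ↦ ?_⟩
  · rw [graphPermutonCM, Measure.map_map measurable_fst hgraph,
      Measure.map_apply (measurable_fst.comp hgraph) (.singleton x)]
    exact hval x
  · rw [graphPermutonCM, Measure.map_map measurable_snd hgraph,
      Measure.map_apply (measurable_snd.comp hgraph) (.singleton y)]
    exact (f.2.measure_preimage
      (measurable_subtype_coe (.singleton y)).nullMeasurableSet).trans (hval y)

theorem patternProb_graphPermutonCM (f : MPContinuousMap) (π : Equiv.Perm (Fin n)) :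
    patternProb (graphPermutonCM f) π = n.factorial *
      (Measure.pi fun _ : Fin n ↦ (volume : Measure I)).real
        {x | StrictMono x ∧ HasPattern (f.1 ∘ x) π} :=
  patternProb_map_prodMk measurable_subtype_coe
    (measurable_subtype_coe.comp f.1.continuous.measurable) π

theorem sum_patternProb_graphPermutonCM (f : MPContinuousMap) (G : Finset (Equiv.Perm (Fin n))) :
    ∑ π ∈ G, patternProb (graphPermutonCM f) π = n.factorial *
      (Measure.pi fun _ : Fin n ↦ (volume : Measure I)).real
        {x | StrictMono x ∧ ∃ π ∈ G, HasPattern (f.1 ∘ x) π} :=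
  sum_patternProb_map_prodMk measurable_subtype_coe
    (measurable_subtype_coe.comp f.1.continuous.measurable) G

theorem eventually_hasPattern_iff {α β : Type*} [LinearOrder α] [TopologicalSpace α]
    [OrderClosedTopology α] {l : Filter β} {u : β → Fin n → α} {y : Fin n → α}
    (hu : Tendsto u l (nhds y)) (hy : Function.Injective y) (π : Equiv.Perm (Fin n)) :
    ∀ᶠ b in l, HasPattern (u b) π ↔ HasPattern y π := by
  have hlt (i j : Fin n) (hij : i < j) : ∀ᶠ b in l, (u b i < u b j ↔ y i < y j) := by
    have hi := tendsto_pi_nhds.1 hu i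
    have hj := tendsto_pi_nhds.1 hu j
    rcases lt_or_gt_of_ne (hy.ne hij.ne) with h | h
    · filter_upwards [hi.eventually_lt hj h] with b hb using iff_of_true hb h
    · filter_upwards [hj.eventually_lt hi h] with b hb using iff_of_false hb.asymm h.asymm
  filter_upwards [eventually_all.2 fun i ↦ eventually_all.2 fun j ↦ eventually_imp_distrib_left.2
    (hlt i j)] with b hb
  exact forall₃_congr fun i j hij ↦ by rw [hb i j hij]

theorem continuous_patternProb_graphPermutonCM (π : Equiv.Perm (Fin n)) :
    Continuous fun f : MPContinuousMap ↦ patternProb (graphPermutonCM f) π := by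
  simp only [patternProb_graphPermutonCM]
  refine continuous_const.mul (continuous_iff_seqContinuous.2 fun u f hu ↦ ?_)
  refine (ENNReal.tendsto_toReal (measure_ne_top _ _)).comp ?_
  have hmeas (g : MPContinuousMap) :
      MeasurableSet {x : Fin n → I | StrictMono x ∧ HasPattern (g.1 ∘ x) π} :=
    (measurableSet_setOf_strictMono_comp measurable_id).inter
      (measurableSet_setOf_hasPattern_comp g.1.continuous.measurable π)
  refine tendsto_measure_of_ae_tendsto_indicator_of_isFiniteMeasure atTop (hmeas f)
    (fun k ↦ hmeas (u k)) ?_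
  have hinj : ∀ᵐ x ∂Measure.pi fun _ : Fin n ↦ (volume : Measure I),
      Function.Injective (f.1 ∘ x) :=
    ae_injective_comp_pi f.1.continuous.measurable fun b ↦
      (f.2.measure_preimage (measurableSet_singleton b).nullMeasurableSet).trans (by simp)
  filter_upwards [hinj] with x hx
  have hux : Tendsto (fun k ↦ (u k).1 ∘ x) atTop (nhds (f.1 ∘ x)) := by
    refine tendsto_pi_nhds.2 fun i ↦ ?_
    exact ((continuous_eval_const (F := C(I, I)) (x i)).comp continuous_subtype_val).tendsto f
      |>.comp hu
  filter_upwards [eventually_hasPattern_iff hux hx π] with k hk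
  exact and_congr_right fun _ ↦ hk

theorem continuous_samplingEntropy_graphPermutonCM (n : ℕ) :
    Continuous fun f : MPContinuousMap ↦ samplingEntropy (graphPermutonCM f) n :=
  continuous_finsetSum _ fun π _ ↦
    Real.continuous_negMulLog.comp (continuous_patternProb_graphPermutonCM π)

end GraphPermuton

section Generic

variable {α : Type*} [ConditionallyCompleteLinearOrder α] [DenselyOrdered α] {a : α}

theorem liminf_eq_of_forall_frequently_lt [NoMaxOrder α] {v : ℕ → α} (hav : ∀ n, a ≤ v n)
    (hv : ∀ c > a, ∃ᶠ n in atTop, v n < c) : liminf v atTop = a := by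
  obtain ⟨b, hb⟩ := exists_gt a
  have hcob : IsCoboundedUnder (· ≥ ·) atTop v :=
    .of_frequently_le ((hv b hb).mono fun _ ↦ le_of_lt)
  exact le_antisymm
    (le_of_forall_gt_imp_ge_of_dense fun c hc ↦
      liminf_le_of_frequently_le ((hv c hc).mono fun _ ↦ le_of_lt) (isBoundedUnder_of ⟨a, hav⟩))
    (le_liminf_of_le hcob (.of_forall hav))

variable {X : Type*} [TopologicalSpace X] [TopologicalSpace α] [OrderTopology α]
  [FirstCountableTopology α] {u : ℕ → X → α}

theorem setOf_liminf_eq_mem_residual [NoMaxOrder α] (hu : ∀ n, Continuous (u n))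
    (hau : ∀ n x, a ≤ u n x) (hdense : ∀ c > a, ∀ N, Dense {x | ∃ n ≥ N, u n x < c}) :
    {x | liminf (fun n ↦ u n x) atTop = a} ∈ residual X := by
  obtain ⟨c, -, hac, hc⟩ := exists_seq_strictAnti_tendsto a
  have hfreq (k N : ℕ) : {x | ∃ n ≥ N, u n x < c k} ∈ residual X := by
    refine residual_of_dense_open ?_ (hdense (c k) (hac k) N)
    simp only [Set.ofPred_exists, ← exists_prop, Set.ofPred_exists]
    exact isOpen_iUnion fun n ↦ isOpen_iUnion fun _ ↦ isOpen_lt (hu n) continuous_const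
  filter_upwards [eventually_countable_forall.2 fun k ↦ eventually_countable_forall.2 (hfreq k)]
    with x hx
  refine liminf_eq_of_forall_frequently_lt (fun n ↦ hau n x) fun b hb ↦ ?_
  obtain ⟨k, hk⟩ := (hc.eventually_lt_const hb).exists
  exact frequently_atTop.2 fun N ↦ (hx k N).imp fun n hn ↦ ⟨hn.1, hn.2.trans hk⟩

theorem setOf_limsup_eq_mem_residual [NoMinOrder α] (hu : ∀ n, Continuous (u n))
    (hua : ∀ n x, u n x ≤ a) (hdense : ∀ c < a, ∀ N, Dense {x | ∃ n ≥ N, c < u n x}) :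
    {x | limsup (fun n ↦ u n x) atTop = a} ∈ residual X :=
  setOf_liminf_eq_mem_residual (α := αᵒᵈ) hu hua hdense

end Generic

section Grid

theorem sum_restrict_preimage_singleton {α β : Type*} [MeasurableSpace α] [MeasurableSpace β]
    [MeasurableSingletonClass β] [Fintype β] (μ : Measure α) {X : α → β} (hX : Measurable X) :
    ∑ b, μ.restrict (X ⁻¹' {b}) = μ := by
  ext s hs
  simp only [Measure.coe_finsetSum, Finset.sum_apply, Measure.restrict_apply hs]
  simpa [Measure.restrict_apply (hX (measurableSet_singleton _)), Set.inter_comm] using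
    sum_measure_preimage_singleton (μ := μ.restrict s) Finset.univ
      fun b _ ↦ hX (measurableSet_singleton b)

/-- The `a`-th of the intervals of length `1 / M` into which `[0, 1]` is cut. -/
def gridInterval (M a : ℕ) : Set ℝ :=
  Set.Icc (a / M) ((a + 1) / M)

theorem mem_gridInterval {M a : ℕ} [NeZero M] {x : ℝ} :
    x ∈ gridInterval M a ↔ (a : ℝ) ≤ M * x ∧ M * x ≤ a + 1 := by
  have hM : (0 : ℝ) < M := Nat.cast_pos.2 (NeZero.pos M)
  rw [gridInterval, Set.mem_Icc, div_le_iff₀' hM, le_div_iff₀' hM]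

theorem gridInterval_mul_subset (m k c : ℕ) [NeZero m] [NeZero k] :
    gridInterval (m * k) c ⊆ gridInterval m (c / k) := by
  intro x hx
  rw [mem_gridInterval] at hx ⊢
  have hk : (0 : ℝ) < k := Nat.cast_pos.2 (NeZero.pos k)
  have hlow : ((c / k : ℕ) : ℝ) * k ≤ c := mod_cast Nat.div_mul_le_self c k
  have hupp : (c : ℝ) + 1 ≤ ((c / k : ℕ) + 1) * k := by
    exact_mod_cast add_one_mul (c / k) k ▸ Nat.lt_div_mul_add (NeZero.pos k)
  push_cast at hx
  constructor <;> nlinarith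

theorem gridInterval_subset_unitInterval {M : ℕ} (a : Fin M) : gridInterval M a ⊆ I := by
  have : NeZero M := ⟨a.pos.ne'⟩
  refine Set.Icc_subset_Icc (by positivity) ?_
  rw [div_le_one (Nat.cast_pos.2 (NeZero.pos M))]
  exact_mod_cast a.2

theorem dist_le_of_mem_gridInterval {M a : ℕ} {x y : ℝ} (hx : x ∈ gridInterval M a)
    (hy : y ∈ gridInterval M a) : dist x y ≤ (M : ℝ)⁻¹ :=
  (Real.dist_le_of_mem_Icc hx hy).trans_eq (by ring)

variable {M : ℕ} [NeZero M]

variable (M) in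
/-- The index of the interval `[a / M, (a + 1) / M)` containing `x`; the point `1` is put into the
last interval. -/
noncomputable def gridIndex (x : I) : Fin M :=
  ⟨min ⌊(M : ℝ) * x⌋₊ (M - 1), by have := NeZero.pos M; omega⟩

theorem coe_mem_gridInterval (x : I) : (x : ℝ) ∈ gridInterval M (gridIndex M x) := by
  have hM : 1 ≤ M := NeZero.one_le
  have hMx : (M : ℝ) * x ≤ M := mul_le_of_le_one_right M.cast_nonneg x.2.2
  have hfloor : (⌊(M : ℝ) * x⌋₊ : ℝ) ≤ M * x := Nat.floor_le (by have := x.2.1; positivity)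
  rw [mem_gridInterval, gridIndex]
  rcases le_total ⌊(M : ℝ) * x⌋₊ (M - 1) with h | h
  · simpa only [min_eq_left h] using ⟨hfloor, (Nat.lt_floor_add_one _).le⟩
  · simp only [min_eq_right h]
    refine ⟨(Nat.cast_le.2 h).trans hfloor, ?_⟩
    rwa [Nat.cast_sub hM, Nat.cast_one, sub_add_cancel]

theorem gridIndex_eq {x : I} {a : Fin M} (hl : (a : ℝ) ≤ M * x) (hu : (M : ℝ) * x < a + 1) :
    gridIndex M x = a := by
  have hfloor : ⌊(M : ℝ) * x⌋₊ = a :=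
    (Nat.floor_eq_iff (a.1.cast_nonneg.trans hl)).2 ⟨hl, hu⟩
  ext
  simp only [gridIndex, hfloor]
  omega

theorem mul_lt_gridIndex_add_one {x : I} (hx : x ≠ 1) : (M : ℝ) * x < gridIndex M x + 1 := by
  have hM : (0 : ℝ) < M := Nat.cast_pos.2 (NeZero.pos M)
  have hMx : (M : ℝ) * x < M := mul_lt_of_lt_one_right hM (unitInterval.lt_one_iff_ne_one.2 hx)
  have hfloor := Nat.lt_floor_add_one ((M : ℝ) * x)
  change (M : ℝ) * x < (min ⌊(M : ℝ) * x⌋₊ (M - 1) : ℕ) + 1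
  rcases min_choice ⌊(M : ℝ) * x⌋₊ (M - 1) with h | h
  · rwa [h]
  · rwa [h, Nat.cast_pred (NeZero.pos M), sub_add_cancel]

theorem monotone_gridIndex : Monotone (gridIndex M) := fun x y h ↦
  Fin.mk_le_mk.2 (min_le_min_right _ (Nat.floor_mono (by gcongr)))

theorem measurable_gridIndex : Measurable (gridIndex M) :=
  monotone_gridIndex.measurable

theorem volume_preimage_gridInterval_le (M a : ℕ) :
    volume ((↑) ⁻¹' gridInterval M a : Set I) ≤ ENNReal.ofReal (M : ℝ)⁻¹ :=
  calc volume ((↑) ⁻¹' gridInterval M a : Set I)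
      ≤ volume (gridInterval M a) := by
        rw [unitInterval.volume_apply]
        exact measure_mono (Set.image_preimage_subset _ _)
    _ = ENNReal.ofReal (M : ℝ)⁻¹ := by
        rw [gridInterval, Real.volume_Icc]
        ring_nf

theorem preimage_gridIndex_subset (a : Fin M) :
    gridIndex M ⁻¹' {a} ⊆ ((↑) ⁻¹' gridInterval M a : Set I) := by
  rintro x rfl
  exact coe_mem_gridInterval x

theorem volume_real_preimage_gridIndex (a : Fin M) :
    volume.real (gridIndex M ⁻¹' {a}) = (M : ℝ)⁻¹ := by
  have hle (b : Fin M) : volume.real (gridIndex M ⁻¹' {b}) ≤ (M : ℝ)⁻¹ :=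
    ENNReal.toReal_le_of_le_ofReal (by positivity)
      ((measure_mono (preimage_gridIndex_subset b)).trans (volume_preimage_gridInterval_le M b))
  have hsum : ∑ b, volume.real (gridIndex M ⁻¹' {b}) = ∑ _b : Fin M, (M : ℝ)⁻¹ := by
    rw [sum_measureReal_preimage_singleton _
      fun b _ ↦ measurable_gridIndex (measurableSet_singleton b)]
    simp [NeZero.ne M]
  exact (Finset.sum_eq_sum_iff_of_le fun b _ ↦ hle b).1 hsum a (Finset.mem_univ a)

theorem volume_preimage_gridIndex (a : Fin M) :
    volume (gridIndex M ⁻¹' {a}) = ENNReal.ofReal (M : ℝ)⁻¹ := by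
  rw [← volume_real_preimage_gridIndex a, ofReal_measureReal]

theorem volume_real_preimage_gridIndex_coe (s : Finset (Fin M)) :
    volume.real (gridIndex M ⁻¹' s) = s.card / M := by
  rw [← sum_measureReal_preimage_singleton s
    fun b _ ↦ measurable_gridIndex (measurableSet_singleton b)]
  simp_rw [volume_real_preimage_gridIndex, Finset.sum_const, nsmul_eq_mul, div_eq_mul_inv]

theorem preimage_gridIndex_ae_eq (a : Fin M) :
    gridIndex M ⁻¹' {a} =ᵐ[volume] ((↑) ⁻¹' gridInterval M a : Set I) :=
  ae_eq_of_subset_of_measure_ge (preimage_gridIndex_subset a)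
    ((volume_preimage_gridInterval_le M a).trans_eq (volume_preimage_gridIndex a).symm)
    (measurable_gridIndex (measurableSet_singleton a)).nullMeasurableSet (measure_ne_top _ _)

end Grid

section PiecewiseLinear

/-- The piecewise linear function with value `w k` at the node `k / K` for `k ≤ K`, constant outside
`[0, 1]`. -/
noncomputable def piecewiseLinear (K : ℕ) (w : ℕ → ℝ) (x : ℝ) : ℝ :=
  w 0 + ∑ k ∈ Finset.range K, (w (k + 1) - w k) * max 0 (min (K * x - k) 1)

theorem continuous_piecewiseLinear (K : ℕ) (w : ℕ → ℝ) : Continuous (piecewiseLinear K w) := by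
  unfold piecewiseLinear
  fun_prop

variable {K : ℕ} [NeZero K] {w : ℕ → ℝ}

theorem piecewiseLinear_of_mem_gridInterval {k : Fin K} {x : ℝ} (hx : x ∈ gridInterval K k) :
    piecewiseLinear K w x = w k + (K * x - k) * (w (k + 1) - w k) := by
  obtain ⟨hl, hu⟩ := mem_gridInterval.1 hx
  have hbefore : ∑ j ∈ Finset.range k, (w (j + 1) - w j) * max 0 (min (K * x - j) 1) =
      w k - w 0 := by
    rw [← Finset.sum_range_sub]
    refine Finset.sum_congr rfl fun j hj ↦ ?_
    have hjk : (j : ℝ) + 1 ≤ k := mod_cast Finset.mem_range.1 hj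
    rw [min_eq_right (by linarith), max_eq_right zero_le_one, mul_one]
  have hafter : ∑ j ∈ Finset.Ico (k.1 + 1) K, (w (j + 1) - w j) * max 0 (min (K * x - j) 1) =
      0 := by
    refine Finset.sum_eq_zero fun j hj ↦ ?_
    have hkj : (k : ℝ) + 1 ≤ j := mod_cast (Finset.mem_Ico.1 hj).1
    rw [max_eq_left ((min_le_left _ _).trans (by linarith)), mul_zero]
  rw [piecewiseLinear, ← Finset.sum_range_add_sum_Ico _ k.2.le, Finset.sum_eq_sum_Ico_succ_bot k.2,
    hbefore, hafter, min_eq_left (by linarith), max_eq_right (by linarith)]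
  ring

theorem piecewiseLinear_mem_uIcc {k : Fin K} {x : ℝ} (hx : x ∈ gridInterval K k) :
    piecewiseLinear K w x ∈ Set.uIcc (w k) (w (k + 1)) := by
  obtain ⟨hl, hu⟩ := mem_gridInterval.1 hx
  rw [piecewiseLinear_of_mem_gridInterval hx, ← segment_eq_uIcc, segment_eq_image']
  exact ⟨K * x - k, ⟨by linarith, by linarith⟩, by simp⟩

variable (w) in
/-- `piecewiseLinear K w` as a continuous self-map of `[0, 1]`. -/
noncomputable def piecewiseLinearMap (hw : ∀ j ≤ K, w j ∈ I) : C(I, I) where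
  toFun x := ⟨piecewiseLinear K w x,
    Set.uIcc_subset_Icc (hw _ (gridIndex K x).2.le) (hw _ (gridIndex K x).2)
      (piecewiseLinear_mem_uIcc (coe_mem_gridInterval x))⟩
  continuous_toFun := ((continuous_piecewiseLinear K w).comp continuous_subtype_val).subtype_mk _

theorem map_restrict_piecewiseLinearMap_le (hw : ∀ j ≤ K, w j ∈ I) {k : Fin K}
    (hne : w k ≠ w (k + 1)) :
    (volume.restrict (gridIndex K ⁻¹' {k})).map (piecewiseLinearMap w hw) ≤
      ENNReal.ofReal (K * |w (k + 1) - w k|)⁻¹ •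
        volume.restrict ((↑) ⁻¹' Set.uIcc (w k) (w (k + 1))) := by
  have hmeas := (piecewiseLinearMap w hw).continuous.measurable
  have hslope : K * (w (k + 1) - w k) ≠ 0 :=
    mul_ne_zero (NeZero.ne _) (sub_ne_zero.2 hne.symm)
  refine Measure.le_iff.2 fun B hB ↦ ?_
  rw [Measure.map_apply hmeas hB, Measure.restrict_apply (hmeas hB), Measure.smul_apply,
    Measure.restrict_apply hB, smul_eq_mul, unitInterval.volume_apply, unitInterval.volume_apply]
  set C : Set ℝ := (↑) '' (B ∩ (↑) ⁻¹' Set.uIcc (w k) (w (k + 1)) : Set I)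
  have hsub : ((↑) '' (piecewiseLinearMap w hw ⁻¹' B ∩ gridIndex K ⁻¹' {k}) : Set ℝ) ⊆
      (K * (w (k + 1) - w k) * ·) ⁻¹' ((· + (w k - k * (w (k + 1) - w k))) ⁻¹' C) := by
    rintro _ ⟨x, ⟨hxB, rfl⟩, rfl⟩
    refine ⟨piecewiseLinearMap w hw x,
      ⟨hxB, piecewiseLinear_mem_uIcc (coe_mem_gridInterval x)⟩, ?_⟩
    refine (piecewiseLinear_of_mem_gridInterval (coe_mem_gridInterval x)).trans ?_
    ring
  refine (measure_mono hsub).trans_eq ?_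
  rw [Real.volume_preimage_mul_left hslope, measure_preimage_add_right, abs_inv, abs_mul,
    Nat.abs_cast]

theorem map_piecewiseLinearMap_le (hw : ∀ j ≤ K, w j ∈ I) {c : ℝ} (hc : 0 < c)
    (hsep : ∀ k < K, c ≤ |w (k + 1) - w k|) :
    volume.map (piecewiseLinearMap w hw) ≤ ENNReal.ofReal c⁻¹ • volume := by
  have hK : (0 : ℝ) < K := Nat.cast_pos.2 (NeZero.pos K)
  have hmeas := (piecewiseLinearMap w hw).continuous.measurable
  have hpiece (k : Fin K) :
      (volume.restrict (gridIndex K ⁻¹' {k})).map (piecewiseLinearMap w hw) ≤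
        ENNReal.ofReal (K * c)⁻¹ • volume := by
    have hne : w k ≠ w (k + 1) :=
      (sub_ne_zero.1 (abs_pos.1 (hc.trans_le (hsep k k.2)))).symm
    refine (map_restrict_piecewiseLinearMap_le hw hne).trans ?_
    gcongr
    · exact hsep k k.2
    · exact Measure.restrict_le_self
  calc volume.map (piecewiseLinearMap w hw)
      = ∑ k, (volume.restrict (gridIndex K ⁻¹' {k})).map (piecewiseLinearMap w hw) := by
        rw [← Measure.map_finset_sum hmeas.aemeasurable,
          sum_restrict_preimage_singleton _ measurable_gridIndex]
    _ ≤ ∑ _k : Fin K, ENNReal.ofReal (K * c)⁻¹ • volume :=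
        Finset.sum_le_sum fun k _ ↦ hpiece k
    _ = ENNReal.ofReal c⁻¹ • volume := by
        rw [Finset.sum_const, Finset.card_univ, Fintype.card_fin, ← Nat.cast_smul_eq_nsmul ℝ≥0∞,
          smul_smul, ← ENNReal.ofReal_natCast, ← ENNReal.ofReal_mul K.cast_nonneg, mul_inv,
          mul_inv_cancel_left₀ hK.ne']

end PiecewiseLinear

section Zigzag

variable {m k : ℕ}

/-- Heights `zigzagNode m k c / m` at the points `c / (m * k)` of the map running back and forth `k`
times across each of the intervals of length `1 / m`, from left to right over all; for this `k` has
to be odd. -/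
noncomputable def zigzagNode (m k c : ℕ) : ℝ :=
  ((c / k : ℕ) + (c % k % 2 : ℕ)) / m

theorem zigzagNode_eq_and_eq_or (m : ℕ) (hk : Odd k) (c : ℕ) :
    (zigzagNode m k c = (c / k : ℕ) / m ∧ zigzagNode m k (c + 1) = ((c / k : ℕ) + 1) / m) ∨
      (zigzagNode m k c = ((c / k : ℕ) + 1) / m ∧ zigzagNode m k (c + 1) = (c / k : ℕ) / m) := by
  have hk₀ : 0 < k := hk.pos
  rw [Nat.odd_iff] at hk
  have hmod := Nat.mod_lt c hk₀
  have hdm := Nat.div_add_mod c k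
  by_cases hlast : c % k + 1 = k
  · have hsucc : c + 1 = k * (c / k + 1) := by rw [mul_add]; omega
    have hdiv : (c + 1) / k = c / k + 1 := by rw [hsucc, Nat.mul_div_cancel_left _ hk₀]
    have hmod' : (c + 1) % k = 0 := by rw [hsucc, Nat.mul_mod_right]
    have heven : c % k % 2 = 0 := by omega
    left
    simp [zigzagNode, hdiv, hmod', heven]
  · have hdiv : (c + 1) / k = c / k := Nat.div_eq_of_lt_le (by rw [mul_comm]; omega)
      (by rw [mul_comm, mul_add]; omega)
    have hmod' : (c + 1) % k = c % k + 1 := by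
      have := Nat.div_add_mod (c + 1) k
      rw [hdiv] at this
      omega
    rcases Nat.mod_two_eq_zero_or_one (c % k) with h | h
    · left
      simp [zigzagNode, hdiv, hmod', h, show (c % k + 1) % 2 = 1 by omega]
    · right
      simp [zigzagNode, hdiv, hmod', h, show (c % k + 1) % 2 = 0 by omega]

theorem uIcc_zigzagNode (m : ℕ) (hk : Odd k) (c : ℕ) :
    Set.uIcc (zigzagNode m k c) (zigzagNode m k (c + 1)) = gridInterval m (c / k) := by
  have hle : ((c / k : ℕ) : ℝ) / m ≤ ((c / k : ℕ) + 1) / m := by gcongr; linarith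
  rcases zigzagNode_eq_and_eq_or m hk c with ⟨h, h'⟩ | ⟨h, h'⟩
  · rw [h, h', Set.uIcc_of_le hle, gridInterval]
  · rw [h, h', Set.uIcc_of_ge hle, gridInterval]

theorem abs_zigzagNode_sub (m : ℕ) (hk : Odd k) (c : ℕ) :
    |zigzagNode m k (c + 1) - zigzagNode m k c| = (m : ℝ)⁻¹ := by
  rcases zigzagNode_eq_and_eq_or m hk c with ⟨h, h'⟩ | ⟨h, h'⟩
  · rw [h, h', ← sub_div, add_sub_cancel_left, one_div, abs_inv, Nat.abs_cast]
  · rw [h, h', ← sub_div, sub_add_cancel_left, neg_div, abs_neg, one_div, abs_inv, Nat.abs_cast]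

variable [NeZero m]

theorem zigzagNode_mem_unitInterval (hk : Odd k) {c : ℕ} (hc : c ≤ m * k) :
    zigzagNode m k c ∈ I := by
  have hle : c / k + c % k % 2 ≤ m := by
    rcases hc.eq_or_lt with rfl | hc
    · simp [hk.pos]
    · have := (Nat.div_lt_iff_lt_mul hk.pos).2 hc
      omega
  refine ⟨by unfold zigzagNode; positivity, ?_⟩
  rw [zigzagNode, div_le_one (Nat.cast_pos.2 (NeZero.pos m))]
  exact_mod_cast hle

variable [NeZero k]

variable (m) in
/-- The continuous map of `[0, 1]` running back and forth `k` times across each of the `m` intervals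
of length `1 / m`. -/
noncomputable def zigzag (hk : Odd k) : C(I, I) :=
  piecewiseLinearMap (K := m * k) (zigzagNode m k) fun _ ↦ zigzagNode_mem_unitInterval hk

theorem dist_zigzag_self_le (hk : Odd k) (x : I) : dist (zigzag m hk x) x ≤ (m : ℝ)⁻¹ := by
  have hx := coe_mem_gridInterval (M := m * k) x
  have hzx := uIcc_zigzagNode m hk _ ▸ piecewiseLinear_mem_uIcc (w := zigzagNode m k) hx
  exact dist_le_of_mem_gridInterval hzx (gridInterval_mul_subset m k _ hx)

theorem map_restrict_zigzag_le (hk : Odd k) (c : Fin (m * k)) :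
    (volume.restrict (gridIndex (m * k) ⁻¹' {c})).map (zigzag m hk) ≤
      (k : ℝ≥0∞)⁻¹ • volume.restrict (gridIndex m ⁻¹' {c.divNat}) := by
  have hm : (0 : ℝ) < m := Nat.cast_pos.2 (NeZero.pos m)
  have habs := abs_zigzagNode_sub m hk c
  have hne : zigzagNode m k c ≠ zigzagNode m k (c + 1) := fun h ↦ by
    simp [h, eq_comm, NeZero.ne m] at habs
  refine (map_restrict_piecewiseLinearMap_le _ hne).trans_eq ?_
  have hslope : (((m * k : ℕ) : ℝ) * (m : ℝ)⁻¹)⁻¹ = (k : ℝ)⁻¹ := by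
    push_cast
    field_simp
  rw [habs, uIcc_zigzagNode m hk, hslope,
    ENNReal.ofReal_inv_of_pos (Nat.cast_pos.2 (NeZero.pos k)), ENNReal.ofReal_natCast,
    Measure.restrict_congr_set (preimage_gridIndex_ae_eq c.divNat), Fin.coe_divNat]

theorem measurePreserving_zigzag (hk : Odd k) :
    MeasurePreserving (zigzag m hk) (volume : Measure I) volume := by
  have hmeas := (zigzag m hk).continuous.measurable
  have : IsProbabilityMeasure ((volume : Measure I).map (zigzag m hk)) :=
    Measure.isProbabilityMeasure_map hmeas.aemeasurable
  refine ⟨hmeas, Measure.eq_of_le_of_isProbabilityMeasure ?_⟩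
  calc volume.map (zigzag m hk)
      = ∑ c, (volume.restrict (gridIndex (m * k) ⁻¹' {c})).map (zigzag m hk) := by
        rw [← Measure.map_finset_sum hmeas.aemeasurable,
          sum_restrict_preimage_singleton _ measurable_gridIndex]
    _ ≤ ∑ c : Fin (m * k), (k : ℝ≥0∞)⁻¹ • volume.restrict (gridIndex m ⁻¹' {c.divNat}) :=
        Finset.sum_le_sum fun c _ ↦ map_restrict_zigzag_le hk c
    _ = ∑ p : Fin m × Fin k, (k : ℝ≥0∞)⁻¹ • volume.restrict (gridIndex m ⁻¹' {p.1}) :=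
        finProdFinEquiv.symm.sum_comp fun p ↦
          (k : ℝ≥0∞)⁻¹ • volume.restrict (gridIndex m ⁻¹' {p.1})
    _ = ∑ a : Fin m, volume.restrict (gridIndex m ⁻¹' {a}) := by
        rw [Fintype.sum_prod_type]
        refine Finset.sum_congr rfl fun a _ ↦ ?_
        simp only [Finset.sum_const, Finset.card_univ, Fintype.card_fin]
        rw [← Nat.cast_smul_eq_nsmul ℝ≥0∞, smul_smul,
          ENNReal.mul_inv_cancel (Nat.cast_ne_zero.2 (NeZero.ne k))
            (ENNReal.natCast_ne_top k), one_smul]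
    _ = volume := sum_restrict_preimage_singleton _ measurable_gridIndex

theorem exists_near_map_restrict_gridIndex_le (f : MPContinuousMap) {δ : ℝ} (hδ : 0 < δ) :
    ∃ m : ℕ, ∃ _ : NeZero m, ∀ (k : ℕ) [NeZero k], Odd k →
      ∃ g : MPContinuousMap, dist g f < δ ∧ ∀ c,
        (volume.restrict (gridIndex (m * k) ⁻¹' {c})).map g.1 ≤ (k : ℝ≥0∞)⁻¹ • volume := by
  obtain ⟨ε, hε, hf⟩ := Metric.uniformContinuous_iff.1
    (CompactSpace.uniformContinuous_of_continuous f.1.continuous) (δ / 2) (half_pos hδ)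
  obtain ⟨m, hm⟩ := exists_nat_one_div_lt hε
  refine ⟨m + 1, inferInstance, fun k _ hk ↦
    ⟨⟨f.1.comp (zigzag (m + 1) hk), f.2.comp (measurePreserving_zigzag hk)⟩, ?_, fun c ↦ ?_⟩⟩
  · refine lt_of_le_of_lt ((ContinuousMap.dist_le (half_pos hδ).le).2 fun x ↦ (hf ?_).le)
      (half_lt_self hδ)
    exact (dist_zigzag_self_le hk x).trans_lt (by simpa using hm)
  · have hf := f.1.continuous.measurable
    have hz := (zigzag (m + 1) hk).continuous.measurable
    calc (volume.restrict (gridIndex ((m + 1) * k) ⁻¹' {c})).map (f.1 ∘ zigzag (m + 1) hk)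
        = ((volume.restrict (gridIndex ((m + 1) * k) ⁻¹' {c})).map (zigzag (m + 1) hk)).map
            f.1 := (Measure.map_map hf hz).symm
      _ ≤ ((k : ℝ≥0∞)⁻¹ • volume).map f.1 := Measure.map_mono
          ((map_restrict_zigzag_le hk c).trans (by gcongr; exact Measure.restrict_le_self)) hf
      _ = (k : ℝ≥0∞)⁻¹ • volume := by rw [Measure.map_smul, f.2.map_eq]

end Zigzag

section HighEntropy

section PiMeasure

variable {ι : Type*} [Fintype ι] {α : ι → Type*} [∀ i, MeasurableSpace (α i)]

theorem measure_pi_mono {μ ν : ∀ i, Measure (α i)} [∀ i, SigmaFinite (μ i)]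
    (h : ∀ i, μ i ≤ ν i) : Measure.pi μ ≤ Measure.pi ν := by
  have hle : (Measure.pi μ).toOuterMeasure ≤ OuterMeasure.pi fun i ↦ (ν i).toOuterMeasure := by
    refine OuterMeasure.le_pi.2 fun s _ ↦ ?_
    rw [Measure.coe_toOuterMeasure, Measure.pi_pi]
    exact Finset.prod_le_prod' fun i _ ↦ h i (s i)
  refine Measure.le_iff.2 fun s hs ↦ (hle s).trans_eq ?_
  rw [Measure.pi, toMeasure_apply _ _ hs]

theorem measure_pi_const_smul (ν : ∀ i, Measure (α i)) [∀ i, SigmaFinite (ν i)] {C : ℝ≥0∞}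
    (hC : C ≠ ∞) : Measure.pi (fun i ↦ C • ν i) = C ^ Fintype.card ι • Measure.pi ν := by
  lift C to NNReal using hC
  have (i : ι) : SigmaFinite ((C : ℝ≥0∞) • ν i) := inferInstanceAs (SigmaFinite (C • ν i))
  refine Measure.pi_eq fun s _ ↦ ?_
  simp [Measure.pi_pi, Finset.prod_mul_distrib]

end PiMeasure

variable {α β ι : Type*} [MeasurableSpace α] [MeasurableSpace β] [Fintype ι]
  {μ : Measure α} [IsProbabilityMeasure μ] {ν : Measure β} [IsProbabilityMeasure ν] {X : α → β}

theorem pi_setOf_mem_and_comp_mem_le (hX : Measurable X) {C : ℝ≥0∞} (hC : C ≠ ∞) {s : ι → Set α}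
    (h : ∀ i, (μ.restrict (s i)).map X ≤ C • ν) {A : Set (ι → β)} (hA : MeasurableSet A) :
    Measure.pi (fun _ ↦ μ) {p | (∀ i, p i ∈ s i) ∧ X ∘ p ∈ A} ≤
      C ^ Fintype.card ι * Measure.pi (fun _ ↦ ν) A := by
  have hXι : Measurable fun p : ι → α ↦ X ∘ p := by fun_prop
  have hset : {p : ι → α | (∀ i, p i ∈ s i) ∧ X ∘ p ∈ A} =
      (fun p ↦ X ∘ p) ⁻¹' A ∩ Set.univ.pi s := by
    ext p
    simp [and_comm]
  calc Measure.pi (fun _ ↦ μ) {p | (∀ i, p i ∈ s i) ∧ X ∘ p ∈ A}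
      = Measure.pi (fun i ↦ (μ.restrict (s i)).map X) A := by
        rw [hset, ← Measure.restrict_apply (hXι hA), Measure.restrict_pi_pi,
          ← Measure.map_apply hXι hA,
          ← Measure.pi_map_pi (f := fun _ ↦ X) fun _ ↦ hX.aemeasurable]
        rfl
    _ ≤ Measure.pi (fun _ ↦ C • ν) A := measure_pi_mono h A
    _ = C ^ Fintype.card ι * Measure.pi (fun _ ↦ ν) A := by
        rw [measure_pi_const_smul _ hC, Measure.smul_apply, smul_eq_mul]

theorem pi_setOf_not_injective_comp_le [MeasurableEq β] (hX : Measurable X) {ε : ℝ≥0∞}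
    (hε : ∀ b, μ (X ⁻¹' {b}) ≤ ε) :
    Measure.pi (fun _ : ι ↦ μ) {p | ¬Function.Injective (X ∘ p)} ≤
      (Fintype.card ι * Fintype.card ι) * ε := by
  classical
  have hsub : {p : ι → α | ¬Function.Injective (X ∘ p)} ⊆
      ⋃ q ∈ (Finset.univ : Finset ι).offDiag, {p | X (p q.1) = X (p q.2)} := by
    intro p hp
    obtain ⟨i, j, hij, hne⟩ := Function.not_injective_iff.1 hp
    simp only [Set.mem_iUnion, Finset.mem_offDiag]
    exact ⟨(i, j), ⟨Finset.mem_univ i, Finset.mem_univ j, hne⟩, hij⟩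
  calc Measure.pi (fun _ : ι ↦ μ) {p | ¬Function.Injective (X ∘ p)}
      ≤ ∑ q ∈ (Finset.univ : Finset ι).offDiag,
          Measure.pi (fun _ : ι ↦ μ) {p | X (p q.1) = X (p q.2)} :=
        (measure_mono hsub).trans (measure_biUnion_finset_le _ _)
    _ ≤ (Finset.univ : Finset ι).offDiag.card • ε := Finset.sum_le_card_nsmul _ _ _ fun q hq ↦
        pi_setOf_apply_eq_apply_le hX hε (Finset.mem_offDiag.1 hq).2.2
    _ ≤ (Fintype.card ι * Fintype.card ι) * ε := by
        rw [nsmul_eq_mul, Finset.offDiag_card, Finset.card_univ]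
        gcongr
        exact mod_cast Nat.sub_le _ _

theorem card_filter_strictMono_le (n L : ℕ) :
    (Finset.univ.filter fun c : Fin n → Fin L ↦ StrictMono c).card ≤ L.choose n := by
  classical
  calc (Finset.univ.filter fun c : Fin n → Fin L ↦ StrictMono c).card
      ≤ (Finset.powersetCard n (Finset.univ : Finset (Fin L))).card := by
        refine Finset.card_le_card_of_injOn (fun c ↦ Finset.univ.image c) (fun c hc ↦ ?_)
          fun c hc d hd h ↦ ?_
        · have hc : StrictMono c := by simpa using hc
          simp [Finset.card_image_of_injective _ hc.injective]
        · have hc : StrictMono c := by simpa using hc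
          have hd : StrictMono d := by simpa using hd
          refine (hc.range_inj hd).1 ?_
          simpa using congrArg (fun s : Finset (Fin L) ↦ (s : Set (Fin L))) h
    _ = L.choose n := by simp

variable {n L : ℕ} [LinearOrder β] [TopologicalSpace β] [OrderClosedTopology β]
  [SecondCountableTopology β] [OpensMeasurableSpace β] [NullSingletonClass ν] {l : α → Fin L}

theorem pi_setOf_strictMono_comp_and_hasPattern_le (hX : Measurable X) {C : ℝ≥0∞} (hC : C ≠ ∞)
    (hlX : ∀ a, (μ.restrict (l ⁻¹' {a})).map X ≤ C • ν) (π : Equiv.Perm (Fin n)) :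
    Measure.pi (fun _ : Fin n ↦ μ) {p | StrictMono (l ∘ p) ∧ HasPattern (X ∘ p) π} ≤
      L.choose n * (C ^ n * (n.factorial : ℝ≥0∞)⁻¹) := by
  classical
  set S := Finset.univ.filter fun c : Fin n → Fin L ↦ StrictMono c
  have hsub : {p : Fin n → α | StrictMono (l ∘ p) ∧ HasPattern (X ∘ p) π} ⊆
      ⋃ c ∈ S, {p | (∀ i, p i ∈ l ⁻¹' {c i}) ∧ X ∘ p ∈ {y | HasPattern y π}} := by
    rintro p ⟨hp, hpπ⟩
    simp only [Set.mem_iUnion]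
    exact ⟨l ∘ p, by simpa [S] using hp, fun i ↦ rfl, hpπ⟩
  have hcell (c : Fin n → Fin L) : Measure.pi (fun _ : Fin n ↦ μ)
      {p | (∀ i, p i ∈ l ⁻¹' {c i}) ∧ X ∘ p ∈ {y | HasPattern y π}} ≤
      C ^ n * (n.factorial : ℝ≥0∞)⁻¹ := by
    have h := pi_setOf_mem_and_comp_mem_le hX hC (fun i ↦ hlX (c i))
      (measurableSet_setOf_hasPattern_comp measurable_id π)
    have hπ := pi_setOf_hasPattern (μ := ν) measurable_id (fun b ↦ measure_singleton b) π
    rwa [hπ, Fintype.card_fin] at h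
  calc Measure.pi (fun _ : Fin n ↦ μ) {p | StrictMono (l ∘ p) ∧ HasPattern (X ∘ p) π}
      ≤ S.card • (C ^ n * (n.factorial : ℝ≥0∞)⁻¹) :=
        ((measure_mono hsub).trans (measure_biUnion_finset_le _ _)).trans
          (Finset.sum_le_card_nsmul _ _ _ fun c _ ↦ hcell c)
    _ ≤ L.choose n * (C ^ n * (n.factorial : ℝ≥0∞)⁻¹) := by
        rw [nsmul_eq_mul]
        gcongr
        exact card_filter_strictMono_le n L

theorem pi_setOf_strictMono_and_hasPattern_le [Preorder α] (hX : Measurable X) {C : ℝ≥0∞}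
    (hC : C ≠ ∞) (hl : Monotone l) (hlm : Measurable l) {ε : ℝ≥0∞} (hε : ∀ a, μ (l ⁻¹' {a}) ≤ ε)
    (hlX : ∀ a, (μ.restrict (l ⁻¹' {a})).map X ≤ C • ν) (π : Equiv.Perm (Fin n)) :
    Measure.pi (fun _ : Fin n ↦ μ) {p | StrictMono p ∧ HasPattern (X ∘ p) π} ≤
      n * n * ε + L.choose n * (C ^ n * (n.factorial : ℝ≥0∞)⁻¹) := by
  have hsub : {p : Fin n → α | StrictMono p ∧ HasPattern (X ∘ p) π} ⊆
      {p | ¬Function.Injective (l ∘ p)} ∪ {p | StrictMono (l ∘ p) ∧ HasPattern (X ∘ p) π} := by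
    rintro p ⟨hp, hpπ⟩
    rw [Set.mem_union, Set.mem_ofPred_eq, ← imp_iff_not_or]
    exact fun hinj ↦ ⟨(hl.comp hp.monotone).strictMono_of_injective hinj, hpπ⟩
  refine (measure_mono hsub).trans ((measure_union_le _ _).trans (add_le_add ?_
    (pi_setOf_strictMono_comp_and_hasPattern_le hX hC hlX π)))
  simpa using pi_setOf_not_injective_comp_le (ι := Fin n) hlm hε

variable {m k : ℕ} [NeZero m] [NeZero k] {g : MPContinuousMap}

theorem patternProb_graphPermutonCM_le
    (hg : ∀ c, (volume.restrict (gridIndex (m * k) ⁻¹' {c})).map g.1 ≤ (k : ℝ≥0∞)⁻¹ • volume)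
    (π : Equiv.Perm (Fin n)) :
    patternProb (graphPermutonCM g) π ≤
      n.factorial * (n * n) / (m * k) + m ^ n / n.factorial := by
  have hm : (0 : ℝ) < m := Nat.cast_pos.2 (NeZero.pos m)
  have hk : (0 : ℝ) < k := Nat.cast_pos.2 (NeZero.pos k)
  have hkinv : (k : ℝ≥0∞)⁻¹ ≠ ∞ := ENNReal.inv_ne_top.2 (Nat.cast_ne_zero.2 (NeZero.ne k))
  have hpi := pi_setOf_strictMono_and_hasPattern_le g.1.continuous.measurable hkinv
    monotone_gridIndex measurable_gridIndex (fun a ↦ (volume_preimage_gridIndex a).le) hg π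
  have hreal := ENNReal.toReal_mono (by finiteness) hpi
  rw [ENNReal.toReal_add (by finiteness) (by finiteness)] at hreal
  simp only [ENNReal.toReal_mul, ENNReal.toReal_natCast, ENNReal.toReal_pow, ENNReal.toReal_inv,
    ENNReal.toReal_ofReal (inv_nonneg.2 (Nat.cast_nonneg (α := ℝ) (m * k)))] at hreal
  have hchoose := Nat.choose_le_pow_div (α := ℝ) n (m * k)
  calc patternProb (graphPermutonCM g) π
      = n.factorial * (Measure.pi fun _ ↦ (volume : Measure I)).real
          {x | StrictMono x ∧ HasPattern (g.1 ∘ x) π} := patternProb_graphPermutonCM g π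
    _ ≤ n.factorial * (n * n * ((m * k : ℕ) : ℝ)⁻¹ +
          ((m * k : ℕ) : ℝ) ^ n / n.factorial * ((k : ℝ)⁻¹ ^ n * (n.factorial : ℝ)⁻¹)) := by
        gcongr
        exact hreal.trans (by gcongr)
    _ = n.factorial * (n * n) / (m * k) + m ^ n / n.factorial := by
        rw [Nat.cast_mul, mul_pow, inv_pow]
        field_simp

theorem samplingEntropy_graphPermutonCM_ge (hn : n ≠ 0)
    (hg : ∀ c, (volume.restrict (gridIndex (m * k) ⁻¹' {c})).map g.1 ≤ (k : ℝ≥0∞)⁻¹ • volume)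
    (hk : n.factorial * (n * n) / (m ^ n / n.factorial) ≤ (m * k : ℝ)) :
    n * Real.log n - n * (2 + Real.log m) ≤ samplingEntropy (graphPermutonCM g) n := by
  have hm : (0 : ℝ) < m := Nat.cast_pos.2 (NeZero.pos m)
  have hk₀ : (0 : ℝ) < k := Nat.cast_pos.2 (NeZero.pos k)
  have hD (π : Equiv.Perm (Fin n)) :
      patternProb (graphPermutonCM g) π ≤ 2 * (m ^ n / n.factorial) := by
    have hcol : n.factorial * (n * n) / (m * k) ≤ (m ^ n / n.factorial : ℝ) :=
      (div_le_comm₀ (by positivity) (by positivity)).1 hk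
    linarith [patternProb_graphPermutonCM_le hg π]
  have hent := (isPrePermuton_graphPermutonCM g).neg_log_le_samplingEntropy hD
  rw [Real.log_mul (by norm_num) (by positivity), Real.log_div (by positivity) (by positivity),
    Real.log_pow] at hent
  have hlog2 : Real.log 2 ≤ n := by
    have : (1 : ℝ) ≤ n := Nat.one_le_cast.2 (Nat.one_le_iff_ne_zero.2 hn)
    linarith [Real.log_two_lt_d9]
  have hlogn := Real.log_natCast_nonneg n
  have hlogπ : 0 ≤ Real.log (2 * Real.pi) := Real.log_nonneg (by linarith [Real.two_le_pi])
  linarith [Stirling.le_log_factorial_stirling hn]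

theorem dense_setOf_exists_lt_samplingEntropy_div {c : ℝ} (hc : c < 1) (N : ℕ) :
    Dense {f | ∃ n ≥ N, c < samplingEntropy (graphPermutonCM f) n / (n * Real.log n)} := by
  refine Metric.dense_iff.2 fun f δ hδ ↦ ?_
  obtain ⟨m, _, happrox⟩ := exists_near_map_restrict_gridIndex_le f hδ
  have hlog : Tendsto (fun n : ℕ ↦ (1 - c) * Real.log n) atTop atTop :=
    (Real.tendsto_log_atTop.comp tendsto_natCast_atTop_atTop).const_mul_atTop (sub_pos.2 hc)
  obtain ⟨n, hlarge, hN, hn⟩ := ((hlog.eventually_gt_atTop (2 + Real.log m)).and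
    ((eventually_ge_atTop N).and (eventually_ge_atTop 2))).exists
  obtain ⟨q, hq⟩ := exists_nat_ge ((n.factorial : ℝ) * (n * n) / (m ^ n / n.factorial))
  obtain ⟨g, hgf, hg⟩ := happrox (2 * q + 1) (odd_two_mul_add_one q)
  have hk : n.factorial * (n * n) / (m ^ n / n.factorial) ≤ (m * (2 * q + 1 : ℕ) : ℝ) := by
    refine hq.trans ?_
    exact_mod_cast (by omega : q ≤ 2 * q + 1).trans (Nat.le_mul_of_pos_left _ (NeZero.pos m))
  refine ⟨g, hgf, n, hN, ?_⟩
  have hn₁ : (1 : ℝ) < n := Nat.one_lt_cast.2 hn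
  have hlogn : 0 < Real.log n := Real.log_pos hn₁
  rw [lt_div_iff₀ (by positivity)]
  nlinarith [samplingEntropy_graphPermutonCM_ge (by omega) hg hk]

end HighEntropy

section Quantile

theorem continuous_measureReal_Iic {α : Type*} [TopologicalSpace α] [LinearOrder α]
    [OrderTopology α] [FirstCountableTopology α] [MeasurableSpace α] [OpensMeasurableSpace α]
    (ν : Measure α) [IsFiniteMeasure ν] [NullSingletonClass ν] :
    Continuous fun x ↦ ν.real (Set.Iic x) := by
  refine continuous_iff_continuousAt.2 fun x ↦ (ENNReal.tendsto_toReal (measure_ne_top _ _)).comp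
    (tendsto_measure_of_ae_tendsto_indicator_of_isFiniteMeasure (nhds x) measurableSet_Iic
      (fun _ ↦ measurableSet_Iic) ?_)
  filter_upwards [Measure.ae_ne ν x] with t ht
  rcases ht.lt_or_gt with h | h
  · filter_upwards [eventually_gt_nhds h] with y hy using iff_of_true hy.le h.le
  · filter_upwards [eventually_lt_nhds h] with y hy using iff_of_false hy.not_ge h.not_ge

theorem strictMono_measureReal_Iic {α : Type*} [TopologicalSpace α] [LinearOrder α]
    [OrderTopology α] [DenselyOrdered α] [MeasurableSpace α] [OpensMeasurableSpace α]
    (ν : Measure α) [IsFiniteMeasure ν] [ν.IsOpenPosMeasure] :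
    StrictMono fun x ↦ ν.real (Set.Iic x) := by
  intro x y hxy
  have hpos : 0 < ν.real (Set.Ioc x y) := ENNReal.toReal_pos
    ((Measure.measure_Ioo_pos ν).2 hxy |>.trans_le (measure_mono Set.Ioo_subset_Ioc_self)).ne'
    (measure_ne_top _ _)
  change ν.real (Set.Iic x) < ν.real (Set.Iic y)
  rw [← Set.Iic_union_Ioc_eq_Iic hxy.le,
    measureReal_union (Set.Iic_disjoint_Ioc le_rfl) measurableSet_Ioc]
  exact lt_add_of_pos_right _ hpos

theorem exists_orderIso_map_volume_eq (ν : Measure I) [IsProbabilityMeasure ν]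
    [NullSingletonClass ν] [ν.IsOpenPosMeasure] : ∃ G : I ≃o I, volume.map G = ν := by
  let F : I → I := fun x ↦ ⟨ν.real (Set.Iic x), measureReal_nonneg, measureReal_le_one⟩
  have hcont : Continuous F := (continuous_measureReal_Iic ν).subtype_mk _
  have hmono : StrictMono F := strictMono_measureReal_Iic ν
  have hbot : F ⊥ = ⊥ := Subtype.ext (by simp [F, measureReal_def])
  have htop : F ⊤ = ⊤ := Subtype.ext (by simp [F])
  have hsurj : Function.Surjective F := fun u ↦ mem_range_of_exists_le_of_exists_ge hcont
    ⟨⊥, hbot.trans_le bot_le⟩ ⟨⊤, le_top.trans_eq htop.symm⟩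
  let e := hmono.orderIsoOfSurjective F hsurj
  have hmeas : Measurable e.symm := e.symm.continuous.measurable
  have := Measure.isProbabilityMeasure_map (μ := (volume : Measure I)) hmeas.aemeasurable
  refine ⟨e.symm, Measure.ext_of_Iic _ _ fun x ↦ ?_⟩
  rw [Measure.map_apply hmeas measurableSet_Iic, OrderIso.preimage_Iic, unitInterval.volume_Iic]
  exact ofReal_measureReal

theorem dist_self_le_of_map_volume_eq {ν : Measure I} {G : I ≃o I} (hG : volume.map G = ν)
    {r : ℝ} (hν : ∀ x : I, |ν.real (Set.Iic x) - x| ≤ r) (u : I) : dist (G u) u ≤ r := by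
  have hu : ν.real (Set.Iic (G u)) = u := by
    rw [← hG, map_measureReal_apply G.continuous.measurable measurableSet_Iic,
      OrderIso.preimage_Iic, OrderIso.symm_apply_apply, measureReal_def, unitInterval.volume_Iic,
      ENNReal.toReal_ofReal u.2.1]
  rw [dist_comm, Subtype.dist_eq, Real.dist_eq, ← hu]
  exact hν _

end Quantile

section PerturbedSection

variable {α β : Type*} [MeasurableSpace α] [MeasurableSpace β] {μ : Measure α} {ν : Measure β}
  {h : α → β} {s : β → α} {e : ℝ≥0∞}

/-- For a section `s` of `h` and a small weight `e`, the image of `ν` under `s`, perturbed in such a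
way that it dominates `e • μ` and that its image under `h` is still `ν`. -/
noncomputable def perturbedSection (μ : Measure α) (ν : Measure β) (h : α → β) (s : β → α)
    (e : ℝ≥0∞) : Measure α :=
  e • μ + (ν - e • μ.map h).map s

theorem smul_le_perturbedSection : e • μ ≤ perturbedSection μ ν h s e :=
  Measure.le_add_right le_rfl

theorem perturbedSection_apply_le (hs : Measurable s) {B : Set α} (hB : MeasurableSet B) :
    perturbedSection μ ν h s e B ≤ e * μ B + ν (s ⁻¹' B) := by
  rw [perturbedSection, Measure.add_apply, Measure.map_apply hs hB, Measure.smul_apply,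
    smul_eq_mul]
  gcongr
  exact Measure.sub_le

theorem map_perturbedSection [IsFiniteMeasure ν] (he : e • μ.map h ≤ ν) (hh : Measurable h)
    (hs : Measurable s) (hhs : Function.LeftInverse h s) :
    (perturbedSection μ ν h s e).map h = ν := by
  have : IsFiniteMeasure (e • μ.map h) := isFiniteMeasure_of_le ν he
  rw [perturbedSection, Measure.map_add _ _ hh, Measure.map_smul, Measure.map_map hh hs,
    hhs.comp_eq_id, Measure.map_id, add_comm, Measure.sub_add_cancel_of_le he]

theorem le_perturbedSection_apply_add [IsProbabilityMeasure μ] [IsFiniteMeasure ν]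
    (he : e • μ.map h ≤ ν) (hh : Measurable h) (hs : Measurable s) {B : Set α}
    (hB : MeasurableSet B) :
    ν (s ⁻¹' B) ≤ perturbedSection μ ν h s e B + e := by
  have : IsFiniteMeasure (e • μ.map h) := isFiniteMeasure_of_le ν he
  have := Measure.isProbabilityMeasure_map (μ := μ) hh.aemeasurable
  calc ν (s ⁻¹' B) = (ν - e • μ.map h) (s ⁻¹' B) + (e • μ.map h) (s ⁻¹' B) := by
        rw [← Measure.add_apply, Measure.sub_add_cancel_of_le he]
    _ ≤ perturbedSection μ ν h s e B + e := by
        gcongr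
        · rw [perturbedSection, Measure.add_apply, Measure.map_apply hs hB]
          exact le_add_self
        · exact mul_le_of_le_one_right' prob_le_one

theorem abs_perturbedSection_real_sub_le [IsProbabilityMeasure μ] [IsFiniteMeasure ν]
    (he : e • μ.map h ≤ ν) (he' : e ≠ ∞) (hh : Measurable h) (hs : Measurable s) {B : Set α}
    (hB : MeasurableSet B) :
    |(perturbedSection μ ν h s e).real B - ν.real (s ⁻¹' B)| ≤ e.toReal := by
  have hupp : perturbedSection μ ν h s e B ≤ ν (s ⁻¹' B) + e :=
    (perturbedSection_apply_le hs hB).trans <| (add_comm _ _).trans_le <| by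
      gcongr
      exact mul_le_of_le_one_right' prob_le_one
  have hfin : perturbedSection μ ν h s e B ≠ ∞ := ne_top_of_le_ne_top (by finiteness) hupp
  have hupp' := ENNReal.toReal_le_add hupp (measure_ne_top _ _) he'
  have hlow' := ENNReal.toReal_le_add (le_perturbedSection_apply_add he hh hs hB) hfin he'
  rw [measureReal_def, measureReal_def, abs_sub_le_iff]
  constructor <;> linarith

theorem nullSingletonClass_perturbedSection [NullSingletonClass μ] [NullSingletonClass ν]
    [MeasurableSingletonClass α] (hs : Measurable s) (hs' : Function.Injective s) :
    NullSingletonClass (perturbedSection μ ν h s e) where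
  measure_singleton x := by
    have hsub : (s ⁻¹' {x}).Subsingleton := Set.subsingleton_singleton.preimage hs'
    simpa [hsub.measure_zero] using
      perturbedSection_apply_le (μ := μ) (ν := ν) (h := h) (e := e) hs (measurableSet_singleton x)

instance isOpenPosMeasure_volume_unitInterval : (volume : Measure I).IsOpenPosMeasure where
  open_pos U hU hne := by
    obtain ⟨a, b, hab, hsub⟩ := hU.exists_Ioo_subset hne
    have hpos : 0 < volume (Set.Ioo a b) := by
      rw [unitInterval.volume_Ioo, ENNReal.ofReal_pos]
      exact sub_pos.2 hab
    exact (hpos.trans_le (measure_mono hsub)).ne'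

theorem exists_orderIso_measurePreserving_comp {h s : I → I} (hh : Measurable h)
    (hs : Measurable s) (hhs : Function.LeftInverse h s) {η r : ℝ} (hη : 0 < η)
    (he : ENNReal.ofReal η • volume.map h ≤ volume)
    (hr : ∀ x : I, |volume.real (s ⁻¹' Set.Iic x) - x| ≤ r) {A : Set I} (hA : MeasurableSet A)
    (hsA : ∀ᵐ y, s y ∈ A) :
    ∃ G : I ≃o I, MeasurePreserving (h ∘ G) ∧ (∀ u, dist (G u) u ≤ r + η) ∧
      volume (G ⁻¹' Aᶜ) ≤ ENNReal.ofReal η := by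
  set ν := perturbedSection volume volume h s (ENNReal.ofReal η)
  have hmap : ν.map h = volume := map_perturbedSection he hh hs hhs
  have : IsProbabilityMeasure (ν.map h) := hmap ▸ inferInstance
  have : IsProbabilityMeasure ν := Measure.isProbabilityMeasure_of_map h
  have : NullSingletonClass ν := nullSingletonClass_perturbedSection hs hhs.injective
  have : ν.IsOpenPosMeasure :=
    have := Measure.isOpenPosMeasure_smul (volume : Measure I) (ENNReal.ofReal_pos.2 hη).ne'
    smul_le_perturbedSection.isOpenPosMeasure
  obtain ⟨G, hG⟩ := exists_orderIso_map_volume_eq ν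
  have hmeas : Measurable G := G.continuous.measurable
  have hcdf (x : I) : |ν.real (Set.Iic x) - x| ≤ r + η := by
    have hpert : |ν.real (Set.Iic x) - volume.real (s ⁻¹' Set.Iic x)| ≤ η := by
      simpa [hη.le] using
        abs_perturbedSection_real_sub_le he ENNReal.ofReal_ne_top hh hs measurableSet_Iic
    linarith [abs_sub_le (ν.real (Set.Iic x)) (volume.real (s ⁻¹' Set.Iic x)) x, hr x]
  refine ⟨G, ⟨hh.comp hmeas, ?_⟩, dist_self_le_of_map_volume_eq hG hcdf, ?_⟩
  · rw [← Measure.map_map hh hmeas, hG, hmap]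
  · calc volume (G ⁻¹' Aᶜ) = ν Aᶜ := by rw [← hG, Measure.map_apply hmeas hA.compl]
      _ ≤ ENNReal.ofReal η * volume Aᶜ + volume (s ⁻¹' Aᶜ) :=
        perturbedSection_apply_le hs hA.compl
      _ = ENNReal.ofReal η * volume Aᶜ := by rw [show volume (s ⁻¹' Aᶜ) = 0 from hsA, add_zero]
      _ ≤ ENNReal.ofReal η := mul_le_of_le_one_right' prob_le_one

end PerturbedSection

section Comb

variable {M : ℕ} [NeZero M]

theorem exists_perm_forall_exists_gridIndex_eq {f : I → I} (hf : MeasurePreserving f) :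
    ∃ τ : Equiv.Perm (Fin M), ∀ a, ∃ x, gridIndex M x = a ∧ gridIndex M (f x) = τ a := by
  classical
  let t (a : Fin M) : Finset (Fin M) := {b | ∃ x, gridIndex M x = a ∧ gridIndex M (f x) = b}
  have hall (s : Finset (Fin M)) : s.card ≤ (s.biUnion t).card := by
    have hsub : gridIndex M ⁻¹' s ⊆ f ⁻¹' (gridIndex M ⁻¹' s.biUnion t) := fun x hx ↦
      Finset.mem_biUnion.2 ⟨_, hx, Finset.mem_filter.2 ⟨Finset.mem_univ _, x, rfl, rfl⟩⟩
    have hle := measureReal_mono (μ := volume) hsub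
    rw [hf.measureReal_preimage
      (measurable_gridIndex (Set.toFinite _).measurableSet).nullMeasurableSet,
      volume_real_preimage_gridIndex_coe, volume_real_preimage_gridIndex_coe,
      div_le_div_iff_of_pos_right (Nat.cast_pos.2 (NeZero.pos M))] at hle
    exact_mod_cast hle
  obtain ⟨τ, hτ, hmem⟩ := (Finset.all_card_le_biUnion_card_iff_exists_injective t).1 hall
  exact ⟨Equiv.ofBijective τ (Finite.injective_iff_bijective.1 hτ),
    fun a ↦ (Finset.mem_filter.1 (hmem a)).2⟩

variable (M) in
/-- The index of an interval of length `1 / M` containing the node `j / (3 * M)`, for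
`j ≤ 3 * M`. -/
def combIndex (j : ℕ) : Fin M :=
  ⟨min (j / 3) (M - 1), by have := NeZero.pos M; omega⟩

variable (τ : Equiv.Perm (Fin M))

/-- The heights, in units of `1 / M`, of the comb at the nodes `j / (3 * M)`. On the `a`-th interval
of length `1 / M` it rises from `τ a` to `τ a + 1`, falls back, and moves on to `τ (a + 1)`; the
last of these moves goes to `τ a + 1` instead. -/
def combHeight (j : ℕ) : ℕ :=
  τ (combIndex M j) + if j % 3 = 1 ∨ j = 3 * M then 1 else 0

theorem div_mem_gridInterval_combIndex {j : ℕ} (hj : j ≤ 3 * M) :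
    (j / (3 * M : ℕ) : ℝ) ∈ gridInterval M (combIndex M j) := by
  have hM : (0 : ℝ) < M := Nat.cast_pos.2 (NeZero.pos M)
  have hlow : 3 * (combIndex M j : ℕ) ≤ j := by simp only [combIndex]; omega
  have hupp : j ≤ 3 * (combIndex M j + 1) := by simp only [combIndex]; omega
  have hmul : (M : ℝ) * (j / (3 * M : ℕ)) = j / 3 := by push_cast; field_simp
  rw [mem_gridInterval, hmul, le_div_iff₀' three_pos, div_le_iff₀' three_pos]
  exact ⟨mod_cast hlow, mod_cast hupp⟩

theorem combHeight_div_mem_gridInterval (j : ℕ) :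
    (combHeight τ j / M : ℝ) ∈ gridInterval M (τ (combIndex M j)) := by
  have hM : (M : ℝ) ≠ 0 := NeZero.ne _
  rw [mem_gridInterval, mul_div_cancel₀ _ hM]
  norm_cast
  unfold combHeight
  split_ifs <;> omega

theorem combHeight_succ_ne {j : ℕ} (hj : j < 3 * M) :
    combHeight τ (j + 1) ≠ combHeight τ j := by
  by_cases h : combIndex M (j + 1) = combIndex M j
  · have hval := congrArg Fin.val h
    simp only [combIndex] at hval
    unfold combHeight
    rw [h]
    split_ifs <;> omega
  · have hval := Fin.val_ne_of_ne h
    simp only [combIndex] at hval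
    unfold combHeight
    rw [if_neg (by omega), if_neg (by omega)]
    exact Fin.val_ne_of_ne (τ.injective.ne h)

theorem inv_le_abs_combHeight_div_sub {j : ℕ} (hj : j < 3 * M) :
    (M : ℝ)⁻¹ ≤ |(combHeight τ (j + 1) / M - combHeight τ j / M : ℝ)| := by
  have hne : (combHeight τ (j + 1) : ℤ) - combHeight τ j ≠ 0 :=
    sub_ne_zero.2 (mod_cast combHeight_succ_ne τ hj)
  have habs : (1 : ℝ) ≤ |(combHeight τ (j + 1) : ℝ) - combHeight τ j| := by
    simpa using Int.cast_le (R := ℝ).2 (Int.one_le_abs hne)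
  rw [← sub_div, abs_div, Nat.abs_cast, inv_eq_one_div]
  gcongr

/-- The continuous self-map of `[0, 1]` which, for each `a`, maps the first third of the `a`-th
interval of length `1 / M` increasingly onto the `τ a`-th one. -/
noncomputable def comb : C(I, I) :=
  piecewiseLinearMap (K := 3 * M) (fun j ↦ combHeight τ j / M) fun j _ ↦
    gridInterval_subset_unitInterval _ (combHeight_div_mem_gridInterval τ j)

theorem coe_comb (x : I) :
    (comb τ x : ℝ) = piecewiseLinear (3 * M) (fun j ↦ combHeight τ j / M) x :=
  rfl

theorem map_comb_le : volume.map (comb τ) ≤ (M : ℝ≥0∞) • (volume : Measure I) := by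
  have hM : (0 : ℝ) < M := Nat.cast_pos.2 (NeZero.pos M)
  refine (map_piecewiseLinearMap_le (K := 3 * M) _ (inv_pos.2 hM)
    fun k ↦ inv_le_abs_combHeight_div_sub τ).trans_eq ?_
  rw [inv_inv, ENNReal.ofReal_natCast]

theorem mul_comb {a : Fin M} {x : I} (hl : (a : ℝ) ≤ M * x) (hu : M * (x : ℝ) ≤ a + 1 / 3) :
    (M : ℝ) * comb τ x = τ a + 3 * (M * x - a) := by
  have hM : (M : ℝ) ≠ 0 := NeZero.ne _
  have ha : combIndex M (3 * a) = a := by ext; simp only [combIndex]; omega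
  have ha' : combIndex M (3 * a + 1) = a := by ext; simp only [combIndex]; omega
  have hx : (x : ℝ) ∈ gridInterval (3 * M) (⟨3 * a, by omega⟩ : Fin (3 * M)) := by
    rw [mem_gridInterval]
    push_cast
    constructor <;> linarith
  have hheight : combHeight τ (3 * a) = τ a := by
    rw [combHeight, ha, if_neg (by omega), add_zero]
  have hheight' : combHeight τ (3 * a + 1) = τ a + 1 := by
    rw [combHeight, ha', if_pos (by omega)]
  rw [coe_comb, piecewiseLinear_of_mem_gridInterval hx, hheight, hheight']
  push_cast
  field_simp
  ring

variable {τ} in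
theorem dist_combHeight_div_le {f : I → I} {ε δ : ℝ}
    (hτ : ∀ a, ∃ x, gridIndex M x = a ∧ gridIndex M (f x) = τ a)
    (hf : ∀ x y, dist x y < ε → dist (f x) (f y) ≤ δ) (hε : 2 * (M : ℝ)⁻¹ < ε) {j : ℕ}
    (hj : j ≤ 3 * M) {x : I} (hx : dist (j / (3 * M : ℕ) : ℝ) x ≤ (M : ℝ)⁻¹) :
    dist (combHeight τ j / M : ℝ) (f x) ≤ (M : ℝ)⁻¹ + δ := by
  obtain ⟨z, hz, hfz⟩ := hτ (combIndex M j)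
  have hnode : dist (z : ℝ) (j / (3 * M : ℕ)) ≤ (M : ℝ)⁻¹ :=
    dist_le_of_mem_gridInterval (hz ▸ coe_mem_gridInterval z) (div_mem_gridInterval_combIndex hj)
  have hheight : dist (combHeight τ j / M : ℝ) (f z) ≤ (M : ℝ)⁻¹ :=
    dist_le_of_mem_gridInterval (combHeight_div_mem_gridInterval τ j)
      (hfz ▸ coe_mem_gridInterval (f z))
  have hzx : dist z x < ε := (dist_triangle (z : ℝ) (j / (3 * M : ℕ)) x).trans_lt (by linarith)
  exact (dist_triangle _ (f z : ℝ) _).trans (add_le_add hheight (hf z x hzx))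

variable {τ} in
theorem dist_comb_le {f : I → I} {ε δ : ℝ}
    (hτ : ∀ a, ∃ x, gridIndex M x = a ∧ gridIndex M (f x) = τ a)
    (hf : ∀ x y, dist x y < ε → dist (f x) (f y) ≤ δ) (hε : 2 * (M : ℝ)⁻¹ < ε) (x : I) :
    dist (comb τ x) (f x) ≤ (M : ℝ)⁻¹ + δ := by
  have hx := coe_mem_gridInterval (M := 3 * M) x
  have hinv : ((3 * M : ℕ) : ℝ)⁻¹ ≤ (M : ℝ)⁻¹ := by
    have hM : (0 : ℝ) < M := Nat.cast_pos.2 (NeZero.pos M)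
    gcongr
    exact Nat.le_mul_of_pos_left M three_pos
  set k := gridIndex (3 * M) x
  have hk : (k / (3 * M : ℕ) : ℝ) ≤ (k + 1) / (3 * M : ℕ) := by gcongr; linarith
  have hleft := dist_combHeight_div_le hτ hf hε k.2.le
    ((dist_le_of_mem_gridInterval (Set.left_mem_Icc.2 hk) hx).trans hinv)
  have hright := dist_combHeight_div_le hτ hf hε k.2
    ((dist_le_of_mem_gridInterval (Nat.cast_succ (R := ℝ) k ▸ Set.right_mem_Icc.2 hk) hx).trans
      hinv)
  rw [Subtype.dist_eq, coe_comb]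
  exact (convex_closedBall (f x : ℝ) _).ordConnected.uIcc_subset hleft hright
    (piecewiseLinear_mem_uIcc (w := fun j ↦ (combHeight τ j / M : ℝ)) hx)

end Comb

section CombSection

variable {M : ℕ} [NeZero M] (τ : Equiv.Perm (Fin M))

/-- The section of `comb τ` with values in the rising thirds. -/
noncomputable def combSection (y : I) : I :=
  ⟨(τ.symm (gridIndex M y) + (M * y - gridIndex M y) / 3) / M, by
    obtain ⟨hl, hu⟩ := mem_gridInterval.1 (coe_mem_gridInterval (M := M) y)
    refine gridInterval_subset_unitInterval (τ.symm (gridIndex M y)) (mem_gridInterval.2 ?_)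
    rw [mul_div_cancel₀ _ (NeZero.ne _)]
    constructor <;> linarith⟩

theorem mul_combSection (y : I) :
    (M : ℝ) * combSection τ y = τ.symm (gridIndex M y) + (M * y - gridIndex M y) / 3 :=
  mul_div_cancel₀ _ (NeZero.ne _)

theorem measurable_coe_gridIndex : Measurable fun x ↦ (gridIndex M x : ℝ) :=
  (measurable_of_finite fun a : Fin M ↦ (a : ℝ)).comp measurable_gridIndex

theorem measurable_combSection : Measurable (combSection τ) := by
  have hperm : Measurable fun y ↦ (τ.symm (gridIndex M y) : ℝ) :=
    (measurable_of_finite fun a ↦ (τ.symm a : ℝ)).comp measurable_gridIndex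
  have hindex := measurable_coe_gridIndex (M := M)
  exact Measurable.subtype_mk (by fun_prop)

theorem gridIndex_combSection (y : I) :
    gridIndex M (combSection τ y) = τ.symm (gridIndex M y) := by
  obtain ⟨hl, hu⟩ := mem_gridInterval.1 (coe_mem_gridInterval (M := M) y)
  apply gridIndex_eq <;> rw [mul_combSection] <;> linarith

theorem leftInverse_comb_combSection : Function.LeftInverse (comb τ) (combSection τ) := by
  intro y
  obtain ⟨hl, hu⟩ := mem_gridInterval.1 (coe_mem_gridInterval (M := M) y)
  have hmul := mul_combSection τ y
  refine Subtype.ext (mul_left_cancel₀ (NeZero.ne (M : ℝ)) ?_)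
  rw [mul_comb τ (a := τ.symm (gridIndex M y)) (by linarith) (by linarith), hmul,
    Equiv.apply_symm_apply]
  ring

theorem abs_volume_real_combSection_Iic_sub_le (x : I) :
    |volume.real (combSection τ ⁻¹' Set.Iic x) - x| ≤ (M : ℝ)⁻¹ := by
  have hlow : gridIndex M ⁻¹' ((Finset.Iio (gridIndex M x)).map τ.toEmbedding) ⊆
      combSection τ ⁻¹' Set.Iic x := by
    intro y hy
    have hlt : τ.symm (gridIndex M y) < gridIndex M x := by simpa [← Equiv.eq_symm_apply] using hy
    by_contra hxy
    exact hlt.not_ge (gridIndex_combSection τ y ▸ monotone_gridIndex (not_le.1 hxy).le)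
  have hupp : combSection τ ⁻¹' Set.Iic x ⊆
      gridIndex M ⁻¹' ((Finset.Iic (gridIndex M x)).map τ.toEmbedding) := by
    intro y hy
    have := gridIndex_combSection τ y ▸ monotone_gridIndex (M := M) hy
    simpa [← Equiv.eq_symm_apply] using this
  have hlow' := measureReal_mono (μ := volume) hlow
  have hupp' := measureReal_mono (μ := volume) hupp
  rw [volume_real_preimage_gridIndex_coe, Finset.card_map, Fin.card_Iio] at hlow'
  rw [volume_real_preimage_gridIndex_coe, Finset.card_map, Fin.card_Iic,
    Nat.cast_succ] at hupp'
  exact dist_le_of_mem_gridInterval ⟨hlow', hupp'⟩ (coe_mem_gridInterval x)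

variable (M) in
/-- The union of the first thirds of the intervals of length `1 / M`. -/
def risingThirds : Set I :=
  {x | (M : ℝ) * (x : ℝ) - gridIndex M x < 1 / 3}

theorem measurableSet_risingThirds : MeasurableSet (risingThirds M) :=
  measurableSet_lt ((measurable_subtype_coe.const_mul _).sub measurable_coe_gridIndex)
    measurable_const

theorem ae_combSection_mem_risingThirds : ∀ᵐ y, combSection τ y ∈ risingThirds M := by
  filter_upwards [Measure.ae_ne volume 1] with y hy
  have := mul_lt_gridIndex_add_one (M := M) hy
  rw [risingThirds, Set.mem_ofPred_eq, mul_combSection, gridIndex_combSection]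
  linarith

end CombSection

section BlockMonotone

theorem card_le_of_forall_monotone {α : Type*} [Fintype α] [PartialOrder α] {n : ℕ}
    {S : Finset (Fin n → α)} (hS : ∀ c ∈ S, Monotone c) :
    S.card ≤ (n + 1) ^ Fintype.card α := by
  classical
  let count (c : Fin n → α) (b : α) : Fin (n + 1) :=
    ⟨(List.ofFn c).count b, Nat.lt_succ_of_le (List.count_le_length.trans_eq List.length_ofFn)⟩
  have hcount : Set.InjOn count S := fun c hc d hd hcd ↦
    List.ofFn_injective <|
      (List.perm_iff_count.2 fun b ↦ congrArg Fin.val (congrFun hcd b)).eq_of_pairwise'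
        (hS c hc).sortedLE_ofFn.pairwise (hS d hd).sortedLE_ofFn.pairwise
  exact (Finset.card_le_card_of_injOn count (fun _ _ ↦ Finset.mem_univ _) hcount).trans_eq (by simp)

/-- On `E`, the relative order of the values of `g` is determined by a decomposition of the domain
into `M` consecutive blocks: `g` is increasing on the part of `E` in each block, and its images of
two different blocks are ordered as the labels which `p` assigns to the blocks. -/
def IsBlockMonotoneOn {α β : Type*} [Preorder α] [LT β] (g : α → β) (E : Set α) (M : ℕ) : Prop :=
  ∃ l : α → Fin M, Monotone l ∧ ∃ p : Fin M → Fin M,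
    ∀ u ∈ E, ∀ v ∈ E, u < v → (g u < g v ↔ p (l u) ≤ p (l v))

namespace IsBlockMonotoneOn

variable {α β γ : Type*} [PartialOrder α] [LT β] {g : α → β} {E : Set α} {M : ℕ}

theorem comp_strictMono [PartialOrder γ] (hg : IsBlockMonotoneOn g E M) {G : γ → α}
    (hG : StrictMono G) : IsBlockMonotoneOn (g ∘ G) (G ⁻¹' E) M := by
  obtain ⟨l, hl, p, hp⟩ := hg
  exact ⟨l ∘ G, hl.comp hG.monotone, p, fun u hu v hv huv ↦ hp _ hu _ hv (hG huv)⟩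

theorem card_le (hg : IsBlockMonotoneOn g E M) {n : ℕ} {S : Finset (Equiv.Perm (Fin n))}
    (hS : ∀ π ∈ S, ∃ x : Fin n → α, StrictMono x ∧ (∀ i, x i ∈ E) ∧ HasPattern (g ∘ x) π) :
    S.card ≤ (n + 1) ^ M := by
  classical
  obtain ⟨l, hl, p, hp⟩ := hg
  let r (π : Equiv.Perm (Fin n)) (c : Fin n → Fin M) : Prop :=
    ∀ i j, i < j → (p (c i) ≤ p (c j) ↔ π i < π j)
  have hword : ∀ π ∈ S, ∃ c ∈ ({c | Monotone c} : Finset (Fin n → Fin M)), r π c := by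
    intro π hπ
    obtain ⟨x, hx, hxE, hxπ⟩ := hS π hπ
    exact ⟨l ∘ x, by simpa using hl.comp hx.monotone, fun i j hij ↦
      (hp _ (hxE i) _ (hxE j) (hx hij)).symm.trans (hxπ i j hij)⟩
  refine (Finset.card_le_card_of_forall_subsingleton r hword ?_).trans
    ((card_le_of_forall_monotone (by simp)).trans_eq (by rw [Fintype.card_fin]))
  rintro c - π ⟨-, hπ⟩ τ ⟨-, hτ⟩
  exact HasPattern.unique (y := π) (fun _ _ _ ↦ Iff.rfl) fun i j hij ↦
    (hπ i j hij).symm.trans (hτ i j hij)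

end IsBlockMonotoneOn

theorem measureReal_pi_exists_notMem_le {α : Type*} [MeasurableSpace α] {μ : Measure α}
    [IsProbabilityMeasure μ] {E : Set α} (hE : MeasurableSet E) {n : ℕ} :
    (Measure.pi fun _ : Fin n ↦ μ).real {x | ∃ i, x i ∉ E} ≤ n * μ.real Eᶜ := by
  have heval (i : Fin n) : (Measure.pi fun _ : Fin n ↦ μ).real (Function.eval i ⁻¹' Eᶜ) =
      μ.real Eᶜ :=
    (measurePreserving_eval (fun _ ↦ μ) i).measureReal_preimage hE.compl.nullMeasurableSet
  rw [Set.ofPred_exists]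
  refine (measureReal_iUnion_fintype_le _).trans_eq ?_
  simp_rw [show ∀ i : Fin n, {x : Fin n → α | x i ∉ E} = Function.eval i ⁻¹' Eᶜ from fun _ ↦ rfl,
    heval]
  simp

theorem IsBlockMonotoneOn.samplingEntropy_graphPermutonCM_le {g : MPContinuousMap} {E : Set I}
    {M : ℕ} (hg : IsBlockMonotoneOn g.1 E M) (hE : MeasurableSet E) (n : ℕ) :
    samplingEntropy (graphPermutonCM g) n ≤
      M * Real.log (n + 1) + n.factorial * (n * volume.real Eᶜ) * Real.log n.factorial + 1 := by
  classical
  let S : Finset (Equiv.Perm (Fin n)) :=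
    {π | ∃ x : Fin n → I, StrictMono x ∧ (∀ i, x i ∈ E) ∧ HasPattern (g.1 ∘ x) π}
  have hcard : (S.card : ℝ) ≤ (n + 1) ^ M := by
    exact_mod_cast hg.card_le fun π hπ ↦ (Finset.mem_filter.1 hπ).2
  have hone : (1 : ℝ) ≤ (n + 1) ^ M := one_le_pow₀ (by simp)
  have hcompl : ∑ π ∈ Sᶜ, patternProb (graphPermutonCM g) π ≤
      n.factorial * (n * volume.real Eᶜ) := by
    rw [sum_patternProb_graphPermutonCM]
    gcongr
    refine (measureReal_mono ?_).trans (measureReal_pi_exists_notMem_le hE)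
    rintro x ⟨hx, π, hπ, hxπ⟩
    by_contra hx_mem
    have hxE (i : Fin n) : x i ∈ E := not_not.1 fun hi ↦ hx_mem ⟨i, hi⟩
    exact Finset.mem_compl.1 hπ (Finset.mem_filter.2 ⟨Finset.mem_univ _, x, hx, hxE, hxπ⟩)
  rw [← Real.log_pow]
  exact (isPrePermuton_graphPermutonCM g).samplingEntropy_le_of_sum_compl_le S hone hcard hcompl

theorem isBlockMonotoneOn_comb {M : ℕ} [NeZero M] (τ : Equiv.Perm (Fin M)) :
    IsBlockMonotoneOn (comb τ) (risingThirds M) M := by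
  have hM : (0 : ℝ) < M := Nat.cast_pos.2 (NeZero.pos M)
  have hmul {u : I} (hu : u ∈ risingThirds M) :
      (M : ℝ) * comb τ u = τ (gridIndex M u) + 3 * (M * u - gridIndex M u) :=
    mul_comb τ (mem_gridInterval.1 (coe_mem_gridInterval u)).1 (sub_le_iff_le_add'.1 hu.le)
  refine ⟨gridIndex M, monotone_gridIndex, τ, fun u hu v hv huv ↦ ?_⟩
  have hu₀ := (mem_gridInterval.1 (coe_mem_gridInterval (M := M) u)).1
  have hv₀ := (mem_gridInterval.1 (coe_mem_gridInterval (M := M) v)).1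
  have huv' : (M : ℝ) * u < M * v := mul_lt_mul_of_pos_left huv hM
  rw [← Subtype.coe_lt_coe, ← mul_lt_mul_iff_right₀ hM, hmul hu, hmul hv]
  rw [risingThirds, Set.mem_ofPred_eq] at hu hv
  rcases lt_trichotomy (τ (gridIndex M u)) (τ (gridIndex M v)) with h | h | h
  · have h' : (τ (gridIndex M u) : ℝ) + 1 ≤ τ (gridIndex M v) := mod_cast h
    exact iff_of_true (by linarith) h.le
  · rw [τ.injective h]
    exact iff_of_true (by linarith) le_rfl
  · have h' : (τ (gridIndex M v) : ℝ) + 1 ≤ τ (gridIndex M u) := mod_cast h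
    exact iff_of_false (by linarith) h.not_ge

end BlockMonotone

section LowEntropy

theorem exists_orderIso_measurePreserving_comb_comp {M : ℕ} [NeZero M] (τ : Equiv.Perm (Fin M))
    {η : ℝ} (hη : 0 < η) (hηM : η ≤ (M : ℝ)⁻¹) :
    ∃ G : I ≃o I, MeasurePreserving (comb τ ∘ G) ∧ (∀ u, dist (G u) u ≤ (M : ℝ)⁻¹ + η) ∧
      volume (G ⁻¹' (risingThirds M)ᶜ) ≤ ENNReal.ofReal η := by
  have hM : (0 : ℝ) < M := Nat.cast_pos.2 (NeZero.pos M)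
  have hη_le : ENNReal.ofReal η ≤ (M : ℝ≥0∞)⁻¹ := by
    rw [← ENNReal.ofReal_natCast, ← ENNReal.ofReal_inv_of_pos hM]
    exact ENNReal.ofReal_le_ofReal hηM
  have hmap : ENNReal.ofReal η • volume.map (comb τ) ≤ volume :=
    calc ENNReal.ofReal η • volume.map (comb τ)
        ≤ (M : ℝ≥0∞)⁻¹ • (M : ℝ≥0∞) • (volume : Measure I) := by
          gcongr
          exact map_comb_le τ
      _ = volume := by
          rw [smul_smul, ENNReal.inv_mul_cancel (NeZero.ne _) (ENNReal.natCast_ne_top M), one_smul]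
  exact exists_orderIso_measurePreserving_comp (comb τ).continuous.measurable
    (measurable_combSection τ) (leftInverse_comb_combSection τ) hη hmap
    (abs_volume_real_combSection_Iic_sub_le τ) measurableSet_risingThirds
    (ae_combSection_mem_risingThirds τ)

theorem exists_dist_lt_isBlockMonotoneOn (f : MPContinuousMap) {δ : ℝ} (hδ : 0 < δ) :
    ∃ M : ℕ, ∀ η > 0, ∃ g : MPContinuousMap, dist g f < δ ∧ ∃ E : Set I, MeasurableSet E ∧
      volume.real Eᶜ ≤ η ∧ IsBlockMonotoneOn g.1 E M := by
  obtain ⟨ε, hε, hf⟩ := Metric.uniformContinuous_iff.1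
    (CompactSpace.uniformContinuous_of_continuous f.1.continuous) (δ / 4) (by positivity)
  obtain ⟨m, hm⟩ := exists_nat_one_div_lt (lt_min (div_pos hε four_pos) (div_pos hδ four_pos))
  rw [← Nat.cast_succ, one_div] at hm
  obtain ⟨hmε, hmδ⟩ := lt_min_iff.1 hm
  refine ⟨m.succ, fun η hη ↦ ?_⟩
  have hM : 0 < (m.succ : ℝ)⁻¹ := by positivity
  obtain ⟨τ, hτ⟩ := exists_perm_forall_exists_gridIndex_eq (M := m.succ) f.2
  obtain ⟨G, hG, hGdist, hGvol⟩ :=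
    exists_orderIso_measurePreserving_comb_comp τ (lt_min hM hη) (min_le_left _ _)
  have hGdist' (u : I) : dist (G u) u < ε :=
    (hGdist u).trans_lt (by linarith [min_le_left (m.succ : ℝ)⁻¹ η])
  have hdist (u : I) : dist (comb τ (G u)) (f.1 u) ≤ ((m.succ : ℝ)⁻¹ + δ / 4) + δ / 4 :=
    (dist_triangle _ (f.1 (G u)) _).trans (add_le_add
      (dist_comb_le hτ (fun x y hxy ↦ (hf hxy).le) (by linarith) _) (hf (hGdist' u)).le)
  refine ⟨⟨(comb τ).comp ⟨G, G.continuous⟩, hG⟩,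
    ((ContinuousMap.dist_le (by positivity)).2 hdist).trans_lt (by linarith),
    G ⁻¹' risingThirds m.succ, G.continuous.measurable measurableSet_risingThirds,
    ENNReal.toReal_le_of_le_ofReal hη.le
      (hGvol.trans (ENNReal.ofReal_le_ofReal (min_le_right _ _))),
    (isBlockMonotoneOn_comb τ).comp_strictMono G.strictMono⟩

theorem tendsto_mul_log_add_div_atTop (a b : ℝ) :
    Tendsto (fun n : ℕ ↦ (a * Real.log (n + 1) + b) / n) atTop (nhds 0) := by
  have hconst (r : ℝ) : (fun _ : ℕ ↦ r) =o[atTop] fun n : ℕ ↦ (n : ℝ) :=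
    Asymptotics.isLittleO_const_left.2
      (.inr (tendsto_norm_atTop_atTop.comp tendsto_natCast_atTop_atTop))
  have hsucc : Tendsto (fun n : ℕ ↦ (n : ℝ) + 1) atTop atTop :=
    tendsto_atTop_add_const_right _ _ tendsto_natCast_atTop_atTop
  have hlog : (fun n : ℕ ↦ Real.log (n + 1)) =o[atTop] fun n : ℕ ↦ (n : ℝ) :=
    (Real.isLittleO_log_id_atTop.comp_tendsto hsucc).trans_isBigO
      ((Asymptotics.isBigO_refl _ _).add (hconst 1).isBigO)
  exact ((hlog.const_mul_left a).add (hconst b)).tendsto_div_nhds_zero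

theorem dense_setOf_exists_samplingEntropy_div_lt {c : ℝ} (hc : 0 < c) (N : ℕ) :
    Dense {f | ∃ n ≥ N, samplingEntropy (graphPermutonCM f) n / n < c} := by
  refine Metric.dense_iff.2 fun f δ hδ ↦ ?_
  obtain ⟨M, hM⟩ := exists_dist_lt_isBlockMonotoneOn f hδ
  obtain ⟨n, hn, hnN⟩ := (((tendsto_mul_log_add_div_atTop M 2).eventually_lt_const hc).and
    (eventually_ge_atTop N)).exists
  have hbound : 0 < n.factorial * n * Real.log n.factorial + 1 := by positivity
  obtain ⟨g, hgf, E, hE, hvol, hg⟩ := hM _ (inv_pos.2 hbound)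
  refine ⟨g, hgf, n, hnN, lt_of_le_of_lt ?_ hn⟩
  have herror : n.factorial * (n * volume.real Eᶜ) * Real.log n.factorial ≤ 1 :=
    calc n.factorial * (n * volume.real Eᶜ) * Real.log n.factorial
        = n.factorial * n * Real.log n.factorial * volume.real Eᶜ := by ring
      _ ≤ n.factorial * n * Real.log n.factorial *
            (n.factorial * n * Real.log n.factorial + 1)⁻¹ := by gcongr
      _ ≤ 1 := by
        rw [← div_eq_mul_inv, div_le_one hbound]
        linarith
  have hentropy := hg.samplingEntropy_graphPermutonCM_le hE n
  gcongr
  linarith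

end LowEntropy

/-- For the generic f ∈ C(λ), H_n(μ_f)/n has liminf 0 and H_n(μ_f)/(n log n) has
limsup 1. -/
theorem generic_samplingEntropy_oscillation :
    {f : MPContinuousMap |
        Filter.liminf (fun n : ℕ => samplingEntropy (graphPermutonCM f) n / n) atTop = 0 ∧
        Filter.limsup
          (fun n : ℕ => samplingEntropy (graphPermutonCM f) n / (n * Real.log n)) atTop = 1}
      ∈ residual MPContinuousMap := by
  have hcont := continuous_samplingEntropy_graphPermutonCM
  have hlow := setOf_liminf_eq_mem_residual (a := 0) (fun n ↦ (hcont n).div_const (n : ℝ))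
    (fun n f ↦ div_nonneg ((isPrePermuton_graphPermutonCM f).samplingEntropy_nonneg n)
      n.cast_nonneg)
    fun _ hc ↦ dense_setOf_exists_samplingEntropy_div_lt hc
  have hhigh := setOf_limsup_eq_mem_residual (a := 1)
    (fun n ↦ (hcont n).div_const (n * Real.log n))
    (fun n f ↦ (isPrePermuton_graphPermutonCM f).samplingEntropy_div_le_one n)
    fun _ hc ↦ dense_setOf_exists_lt_samplingEntropy_div hc
  filter_upwards [hlow, hhigh] with f hliminf hlimsup using ⟨hliminf, hlimsup⟩
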